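/- Let X ⊆ P^r_K be a non-degenerate variety of degree 5 and codimension 3 which is not a cone, and suppose X is arithmetically Cohen–Macaulay. Then dim X ≤ 6, X is arithmetically Gorenstein, and X is the Pfaffian variety defined by the five 4×4 Pfaffians of a skew symmetric 5×5 matrix of linear forms, its minimal free resolution being given by the Buchsbaum–Eisenbud complex. -/

import Mathlib

noncomputable section

open MvPolynomial

/-- The polynomial ring `S = K[x_0, …, x_r]`, the homogeneous coordinate ring of `ℙ^r_K`. -/
abbrev PS (K : Type) [Field K] (r : ℕ) : Type := MvPolynomial (Fin (r + 1)) K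

namespace AMD

variable (K : Type) [Field K] (r : ℕ)

/-- `I` is a homogeneous ideal of `S = K[x_0, …, x_r]`. -/
def IsHomIdeal (I : Ideal (PS K r)) : Prop :=
  ∀ p ∈ I, ∀ n : ℕ, homogeneousComponent n p ∈ I

/-- `X = V_+(I)` is non-degenerate: `I` contains no nonzero linear form. -/
def Nondeg (I : Ideal (PS K r)) : Prop :=
  ∀ p ∈ I, p.IsHomogeneous 1 → p = 0

/-- The irrelevant maximal ideal of the homogeneous coordinate ring `A_X = S/I`. -/
def maxIdl (I : Ideal (PS K r)) : Ideal (PS K r ⧸ I) :=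
  (Ideal.span (Set.range (X : Fin (r + 1) → PS K r))).map (Ideal.Quotient.mk I)

/-- `dim X = d`, i.e. the Krull dimension of `A_X = S/I` equals `d + 1`. -/
def DimEq (I : Ideal (PS K r)) (d : ℕ) : Prop :=
  ringKrullDim (PS K r ⧸ I) = (((d : ℕ∞) + 1 : ℕ∞) : WithBot ℕ∞)

/-- The degree-`n` homogeneous component of `A_X = S/I`, as a `K`-subspace. -/
def quotComponent (I : Ideal (PS K r)) (n : ℕ) : Submodule K (PS K r ⧸ I) :=
  (homogeneousSubmodule (Fin (r + 1)) K n).map (Ideal.Quotient.mkₐ K I).toLinearMap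

/-- The Hilbert series of the graded algebra `A_X = S/I`. -/
def hilbSeries (I : Ideal (PS K r)) : PowerSeries ℤ :=
  PowerSeries.mk fun n => (Module.finrank K (quotComponent K r I n) : ℤ)

/-- `deg X = e`, where `d = dim X`:  the numerator polynomial of the Hilbert series of
`A_X` with respect to the denominator `(1 - λ)^(d+1)` takes the value `e` at `λ = 1`. -/
def DegreeEq (I : Ideal (PS K r)) (d e : ℕ) : Prop :=
  ∃ h : Polynomial ℤ,
    hilbSeries K r I * (1 - PowerSeries.X) ^ (d + 1) = PowerSeries.mk (fun n => h.coeff n) ∧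
    h.eval 1 = (e : ℤ)

/-- A graded automorphism of `S`, i.e. a linear change of coordinates of `ℙ^r_K`. -/
def IsGrAut (φ : PS K r ≃ₐ[K] PS K r) : Prop :=
  ∀ i, (φ (X i)).IsHomogeneous 1

/-- `X = V_+(I) ⊆ ℙ^r_K` is a cone (over a variety lying in some hyperplane): after a
linear change of coordinates, `I` is generated by polynomials not involving the last
variable. -/
def IsConeIdeal (I : Ideal (PS K r)) : Prop :=
  ∃ φ : PS K r ≃ₐ[K] PS K r, IsGrAut K r φ ∧
    ∃ J : Ideal (MvPolynomial (Fin r) K),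
      Ideal.map φ I = Ideal.map (rename (Fin.castSucc : Fin r → Fin (r + 1))) J

/-- A (weakly) regular sequence on the ring `A`. -/
def IsRegSeq {A : Type} [CommRing A] (rs : List A) : Prop :=
  ∀ (i : Fin rs.length) (y : A),
    rs.get i * y ∈ Ideal.span {x | x ∈ rs.take i.1} → y ∈ Ideal.span {x | x ∈ rs.take i.1}

/-- `depth A_X = t`: the maximal length of a regular sequence on `A_X = S/I` consisting
of elements of the irrelevant maximal ideal is `t`. -/
def DepthEq (I : Ideal (PS K r)) (t : ℕ) : Prop :=
  (∃ rs : List (PS K r ⧸ I), rs.length = t ∧ (∀ x ∈ rs, x ∈ maxIdl K r I) ∧ IsRegSeq rs) ∧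
  ∀ rs : List (PS K r ⧸ I), (∀ x ∈ rs, x ∈ maxIdl K r I) → IsRegSeq rs → rs.length ≤ t

/-- `X` is arithmetically Cohen-Macaulay: `depth A_X = dim A_X`. -/
def IsACM (I : Ideal (PS K r)) : Prop :=
  ∃ t : ℕ, ringKrullDim (PS K r ⧸ I) = ((t : ℕ∞) : WithBot ℕ∞) ∧ DepthEq K r I t

/-- The socle `{y | m·y = 0}` of `B`, as a `K`-subspace of `B`. -/
def socle (B : Type) [CommRing B] [Algebra K B] (m : Ideal B) : Submodule K B where
  carrier := {y | ∀ z ∈ m, z * y = 0}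
  add_mem' := by
    intro a b ha hb z hz
    rw [mul_add, ha z hz, hb z hz, add_zero]
  zero_mem' := by
    intro z hz
    rw [mul_zero]
  smul_mem' := by
    intro c y hy z hz
    rw [mul_smul_comm, hy z hz, smul_zero]

/-- `X` is arithmetically Gorenstein: `A_X = S/I` is Cohen-Macaulay and its Artinian
reduction by a maximal regular sequence has a one-dimensional socle. -/
def IsArithGorenstein (I : Ideal (PS K r)) : Prop :=
  ∃ (t : ℕ) (rs : List (PS K r ⧸ I)),
    ringKrullDim (PS K r ⧸ I) = ((t : ℕ∞) : WithBot ℕ∞) ∧ rs.length = t ∧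
    (∀ x ∈ rs, x ∈ maxIdl K r I) ∧ IsRegSeq rs ∧
    Module.finrank K
      (socle K ((PS K r ⧸ I) ⧸ Ideal.span {x | x ∈ rs})
        (Ideal.map (Ideal.Quotient.mk (Ideal.span {x | x ∈ rs})) (maxIdl K r I))) = 1

/-- The graded free `S`-module with `β j` generators in "row `j`" for each `j : ℕ`. -/
abbrev FreeGr (β : ℕ → ℕ) : Type := ((j : ℕ) × Fin (β j)) →₀ PS K r

/-- `φ` is a minimal graded homomorphism of graded free modules, where the generator
`(j, t)` of the source has degree `m₁ + j` and the generator `(j', t')` of the target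
has degree `m₂ + j'`: every matrix entry of `φ` is either zero or homogeneous of the
appropriate positive degree. -/
def IsMinGrMap (b₁ b₂ : ℕ → ℕ) (m₁ m₂ : ℕ)
    (φ : FreeGr K r b₁ →ₗ[PS K r] FreeGr K r b₂) : Prop :=
  ∀ (j : ℕ) (t : Fin (b₁ j)) (j' : ℕ) (t' : Fin (b₂ j')),
    (φ (Finsupp.single ⟨j, t⟩ 1)) ⟨j', t'⟩ = 0 ∨
      ∃ dd : ℕ, 1 ≤ dd ∧ dd + (m₂ + j') = m₁ + j ∧
        ((φ (Finsupp.single ⟨j, t⟩ 1)) ⟨j', t'⟩).IsHomogeneous dd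

/-- `b` is the Betti diagram of the ideal `I ⊆ S`, i.e.
`b i j = dim_K Tor_i^S(K, S/I)_{i+j}` for all `i ≥ 1`.  This is expressed by the
existence of a minimal graded free resolution `⋯ → F₂ → F₁ → S → S/I → 0` of `S/I`
in which, for `i ≥ 1`, the free module `F_i` has exactly `b i j` generators of degree
`i + j`. -/
def HasBettiDiagram (I : Ideal (PS K r)) (b : ℕ → ℕ → ℕ) : Prop :=
  ∃ (φ : (i : ℕ) → (FreeGr K r (b (i + 2)) →ₗ[PS K r] FreeGr K r (b (i + 1))))
    (ε : FreeGr K r (b 1) →ₗ[PS K r] PS K r),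
    (∀ (j : ℕ) (t : Fin (b 1 j)), (ε (Finsupp.single ⟨j, t⟩ 1)).IsHomogeneous (1 + j)) ∧
    (∀ i, IsMinGrMap K r (b (i + 2)) (b (i + 1)) (i + 2) (i + 1) (φ i)) ∧
    LinearMap.range ε = I ∧
    LinearMap.ker ε = LinearMap.range (φ 0) ∧
    ∀ i, LinearMap.ker (φ i) = LinearMap.range (φ (i + 1))

/-- The Pfaffian of a (skew-symmetric) `4 × 4` matrix. -/
def pfaff4 {R : Type} [CommRing R] (N : Matrix (Fin 4) (Fin 4) R) : R :=
  N 0 1 * N 2 3 - N 0 2 * N 1 3 + N 0 3 * N 1 2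

/-- The five submaximal (`4 × 4`) Pfaffians of a skew-symmetric `5 × 5` matrix. -/
def subPfaffian {R : Type} [CommRing R] (M : Matrix (Fin 5) (Fin 5) R) (i : Fin 5) : R :=
  pfaff4 (M.submatrix i.succAbove i.succAbove)

/-- `X = V_+(I)` is the Pfaffian variety defined by the five `4 × 4` Pfaffians of a
skew-symmetric `5 × 5` matrix of linear forms. -/
def IsPfaffianVariety (I : Ideal (PS K r)) : Prop :=
  ∃ M : Matrix (Fin 5) (Fin 5) (PS K r),
    M.transpose = -M ∧ (∀ i j, (M i j).IsHomogeneous 1) ∧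
    I = Ideal.span (Set.range (subPfaffian M))

/-- The vanishing ideal of the coordinate point `(0 : ⋯ : 0 : 1) ∈ ℙ^{r+1}_K`. -/
def pointIdl : Ideal (PS K (r + 1)) :=
  Ideal.span ((X : Fin (r + 2) → PS K (r + 1)) '' {i : Fin (r + 2) | i ≠ Fin.last (r + 1)})

/-- `X = V_+(I) ⊆ ℙ^r_K` is the image of `Z = V_+(J) ⊆ ℙ^{r+1}_K` under the projection
from a point `P ∈ ℙ^{r+1}_K ∖ Z`: after a linear change of coordinates moving `P` to
`(0 : ⋯ : 0 : 1)`, the ideal `I` is the contraction of `J` to `K[x_0, …, x_r]`. -/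
def IsProjectionOf (I : Ideal (PS K r)) (J : Ideal (PS K (r + 1))) : Prop :=
  ∃ ψ : PS K (r + 1) ≃ₐ[K] PS K (r + 1), IsGrAut K (r + 1) ψ ∧
    ¬ Ideal.map ψ J ≤ pointIdl K r ∧
    I = Ideal.comap (rename (Fin.castSucc : Fin (r + 1) → Fin (r + 2))) (Ideal.map ψ J)

/-- The ideal of the Veronese surface `F ⊆ ℙ^5_K`, generated by the `2 × 2` minors of
the generic symmetric `3 × 3` matrix with rows `(x₀,x₁,x₂), (x₁,x₃,x₄), (x₂,x₄,x₅)`. -/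
def veroneseIdeal : Ideal (PS K 5) :=
  Ideal.span {X 0 * X 3 - X 1 * X 1, X 0 * X 4 - X 1 * X 2, X 1 * X 4 - X 2 * X 3,
    X 0 * X 5 - X 2 * X 2, X 1 * X 5 - X 2 * X 4, X 3 * X 5 - X 4 * X 4}

/-- The determinant of the generic symmetric `3 × 3` matrix defining the Veronese
surface; it cuts out the secant variety of `F ⊆ ℙ^5_K`. -/
def veroneseDet : PS K 5 :=
  X 0 * X 3 * X 5 - X 0 * X 4 * X 4 - X 1 * X 1 * X 5 + 2 * (X 1 * X 2 * X 4) -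
    X 2 * X 2 * X 3

/-- `X = V_+(I) ⊆ ℙ^4_K` is a generic projection of the Veronese surface `F ⊆ ℙ^5_K`,
i.e. the projection of `F` from a point `P ∈ ℙ^5_K ∖ F` at which the generic symmetric
`3 × 3` matrix `M` has rank `3` (equivalently, `P` does not lie on the secant variety
`{det M = 0}` of `F`). -/
def IsGenProjVeronese4 (I : Ideal (PS K 4)) : Prop :=
  ∃ ψ : PS K 5 ≃ₐ[K] PS K 5, IsGrAut K 5 ψ ∧
    ¬ Ideal.map ψ (Ideal.span {veroneseDet K}) ≤ pointIdl K 4 ∧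
    I = Ideal.comap (rename (Fin.castSucc : Fin 5 → Fin 6)) (Ideal.map ψ (veroneseIdeal K))

/-- `X = V_+(I) ⊆ ℙ^r_K` is a generic projection of the Veronese surface (which forces
`r = 4`). -/
def IsGenProjVeronese (I : Ideal (PS K r)) : Prop :=
  ∃ h : r + 1 = 5, IsGenProjVeronese4 K (Ideal.map (rename (Fin.cast h)) I)

/-- `X = V_+(I) ⊆ ℙ^r_K` is a generic projection of (a cone over) the Veronese surface
`F ⊆ ℙ^5_K`:  `X` is the projection of a cone `Z ⊆ ℙ^{r+1}_K` over `F` from a point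
not lying on the (cone over the) secant variety of `F`. -/
def IsGenProjVeroneseCone (I : Ideal (PS K r)) : Prop :=
  ∃ (h : 6 ≤ r + 2) (ψ : PS K (r + 1) ≃ₐ[K] PS K (r + 1)), IsGrAut K (r + 1) ψ ∧
    ¬ Ideal.map ψ (Ideal.map (rename (Fin.castLE h))
        (Ideal.span {veroneseDet K})) ≤ pointIdl K r ∧
    I = Ideal.comap (rename (Fin.castSucc : Fin (r + 1) → Fin (r + 2)))
      (Ideal.map ψ (Ideal.map (rename (Fin.castLE h)) (veroneseIdeal K)))

/-- The ideal of the rational normal scroll `S(a_1, …, a_k)`, generated by the `2 × 2`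
minors of the standard `2 × (Σ a_i)` matrix of indeterminates. -/
def scrollIdeal (k : ℕ) (a : Fin k → ℕ) :
    Ideal (MvPolynomial ((i : Fin k) × Fin (a i + 1)) K) :=
  Ideal.span {p | ∃ (i : Fin k) (j : Fin (a i)) (i' : Fin k) (j' : Fin (a i')),
    p = X ⟨i, j.castSucc⟩ * X ⟨i', j'.succ⟩ - X ⟨i, j.succ⟩ * X ⟨i', j'.castSucc⟩}

/-- The affine cone in `K^{r+2}` of the projective scheme `V_+(J) ⊆ ℙ^{r+1}_K`. -/
def zeroSet (J : Ideal (PS K (r + 1))) : Set (Fin (r + 2) → K) :=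
  {v | ∀ f ∈ J, MvPolynomial.eval v f = 0}

/-- Restriction of polynomials to the plane spanned by the vectors `p` and `q`
(i.e. to the line through the corresponding projective points). -/
def lineRestrict (p q : Fin (r + 2) → K) : PS K (r + 1) →ₐ[K] MvPolynomial (Fin 2) K :=
  aeval fun i => MvPolynomial.C (p i) * X 0 + MvPolynomial.C (q i) * X 1

/-- The line through the (independent) points `p`, `q` is a secant line of
`Z = V_+(J)`: the scheme `Z ∩ L ⊆ L ≅ ℙ^1` has length at least `2`, i.e. the
restriction of `J` to the line is contained in a principal ideal generated by a
form of degree `≥ 2` (or is zero, in which case `L ⊆ Z`). -/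
def IsSecantLine (J : Ideal (PS K (r + 1))) (p q : Fin (r + 2) → K) : Prop :=
  ∃ h : MvPolynomial (Fin 2) K,
    (∀ f ∈ J, lineRestrict K r p q f ∈ Ideal.span {h}) ∧
    (h = 0 ∨ ∃ dd : ℕ, 2 ≤ dd ∧ h.IsHomogeneous dd)

/-- The (affine cone over the) secant cone `Sec_P(Z)` of `Z = V_+(J)` with respect to
the point `P = [p]`: the union of `{P}` and of all secant lines of `Z` through `P`. -/
def secantCone (J : Ideal (PS K (r + 1))) (p : Fin (r + 2) → K) : Set (Fin (r + 2) → K) :=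
  {v | ∃ a : K, v = a • p} ∪
    {v | ∃ q : Fin (r + 2) → K, LinearIndependent K ![p, q] ∧ IsSecantLine K r J p q ∧
      ∃ a b : K, v = a • p + b • q}

/-- The (homogeneous) vanishing ideal of a subset of the affine cone `K^{r+2}`. -/
def vanishingIdl (T : Set (Fin (r + 2) → K)) : Ideal (PS K (r + 1)) where
  carrier := {f | ∀ v ∈ T, MvPolynomial.eval v f = 0}
  add_mem' := by
    intro a b ha hb v hv
    rw [map_add, ha v hv, hb v hv, add_zero]
  zero_mem' := by
    intro v hv
    rw [map_zero]
  smul_mem' := by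
    intro c f hf v hv
    rw [smul_eq_mul, map_mul, hf v hv, mul_zero]

/-- `X = V_+(I) ⊆ ℙ^r_K` is the image of `Z = V_+(J) ⊆ ℙ^{r+1}_K` under the linear
projection `π : ℙ^{r+1}_K ∖ {P} → ℙ^r_K` from the point `P = [p]`:  `I` is the
contraction of `J` along the substitution homomorphism induced by a surjective linear
map `K^{r+2} → K^{r+1}` with kernel `K·p`. -/
def IsProjectionFromPoint (I : Ideal (PS K r)) (J : Ideal (PS K (r + 1)))
    (p : Fin (r + 2) → K) : Prop :=
  ∃ π : (Fin (r + 2) → K) →ₗ[K] (Fin (r + 1) → K),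
    Function.Surjective π ∧ LinearMap.ker π = Submodule.span K {p} ∧
    I = Ideal.comap
      (aeval (fun j : Fin (r + 1) =>
        ∑ i : Fin (r + 2), MvPolynomial.C (π (Pi.single i 1) j) * X i) :
          PS K r →ₐ[K] PS K (r + 1)) J

end AMD


namespace AMD

/-- Associativity constraints on the structure constants. -/
theorem structure_eqs {T A : Type} [CommRing T] [CommRing A] (ι : T →+* A) (y1 y2 y3 : A) (c : T)
    (a : Fin 5 → Fin 3 → T) (b : Fin 5 → T)
    (hind : ∀ α β1 β2 β3 γ : T, ι α + ι β1 * y1 + ι β2 * y2 + ι β3 * y3 + ι γ * (y1 * y3) = 0 →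
      α = 0 ∧ β1 = 0 ∧ β2 = 0 ∧ β3 = 0 ∧ γ = 0)
    (h1 : y1 * y1 = ι (a 0 0) * y1 + ι (a 0 1) * y2 + ι (a 0 2) * y3 + ι (b 0))
    (h2 : y1 * y2 = ι (a 1 0) * y1 + ι (a 1 1) * y2 + ι (a 1 2) * y3 + ι (b 1))
    (h3 : y2 * y3 = ι (a 2 0) * y1 + ι (a 2 1) * y2 + ι (a 2 2) * y3 + ι (b 2))
    (h4 : y2 * y2 = y1 * y3 + ι (a 3 0) * y1 + ι (a 3 1) * y2 + ι (a 3 2) * y3 + ι (b 3))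
    (h5 : y3 * y3 = ι c * (y1 * y3) + ι (a 4 0) * y1 + ι (a 4 1) * y2 + ι (a 4 2) * y3 + ι (b 4)) :
    (a 1 2 = a 0 1 ∧ a 2 2 = a 1 0 + c * a 0 1 ∧ a 3 2 = a 1 1 - a 0 0 - c * a 0 2 ∧
      a 4 2 = a 2 1 - a 3 0 - c * a 1 1 ∧ a 4 1 = a 2 0) ∧
    (b 0 = -a 0 0 * a 1 1 + a 0 1 * a 1 0 - a 0 1 * a 3 1 - a 0 2 * a 2 1 + a 1 1 ^ 2 ∧
      b 1 = a 0 1 * a 3 0 + a 0 2 * a 2 0 - a 1 0 * a 1 1 ∧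
      b 2 = -a 0 0 * a 2 0 - a 1 0 * a 2 1 + a 1 1 * a 2 0 + a 1 2 * a 4 0 ∧
      b 3 = -a 0 0 * a 3 0 - a 0 1 * a 2 0 - a 0 2 * a 4 0 - a 1 0 * a 3 1 + a 1 0 ^ 2 + a 1 1 * a 3 0 + a 1 2 * a 2 0 ∧
      b 4 = -a 0 0 * a 4 0 - a 0 1 * a 2 0 * c - a 0 2 * a 4 0 * c + a 1 0 * a 2 0 - a 1 0 * a 4 1 + a 2 0 * a 2 2 - a 2 0 * a 3 1 + a 2 1 * a 3 0 - a 3 2 * a 4 0) := by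
  obtain ⟨-, e11, e12, -, eg1⟩ := hind
    (-a 0 0 * b 1 - a 0 1 * b 3 - a 0 2 * b 2 + a 1 0 * b 0 + a 1 1 * b 1)
    (-a 0 1 * a 3 0 - a 0 2 * a 2 0 + a 1 0 * a 1 1 + b 1)
    (-a 0 0 * a 1 1 + a 0 1 * a 1 0 - a 0 1 * a 3 1 - a 0 2 * a 2 1 + a 1 1 ^ 2 - b 0)
    (-a 0 0 * a 1 2 - a 0 1 * a 3 2 + a 0 2 * a 1 0 - a 0 2 * a 2 2 + a 1 1 * a 1 2)
    (-a 0 1 + a 1 2)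
    (by
      simp only [map_add, map_sub, map_mul, map_neg, map_pow]
      linear_combination (y2 - (ι (a 1 0))) * h1 + (-y1 - (-ι (a 0 0) + ι (a 1 1))) * h2 + (- (-ι (a 0 2))) * h3 + (- (-ι (a 0 1))) * h4)
  obtain ⟨-, e21, e22, -, eg2⟩ := hind
    (-a 1 1 * b 2 - a 1 2 * b 4 + a 2 0 * b 0 + a 2 1 * b 1)
    (a 0 0 * a 2 0 + a 1 0 * a 2 1 - a 1 1 * a 2 0 - a 1 2 * a 4 0 + b 2)
    (a 0 1 * a 2 0 - a 1 2 * a 4 1)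
    (a 0 2 * a 2 0 - a 1 1 * a 2 2 + a 1 2 * a 2 1 - a 1 2 * a 4 2 - b 1)
    (-a 1 0 - a 1 2 * c + a 2 2)
    (by
      simp only [map_add, map_sub, map_mul, map_neg, map_pow]
      linear_combination (- (ι (a 2 0))) * h1 + (y3 - (ι (a 2 1))) * h2 + (-y1 - (-ι (a 1 1))) * h3 + (- (-ι (a 1 2))) * h5)
  obtain ⟨-, e31, e32, -, eg3⟩ := hind
    (a 0 1 * b 2 + a 0 2 * b 4 - a 1 0 * b 1 - a 1 1 * b 3 - a 1 2 * b 2 + a 3 0 * b 0 + a 3 1 * b 1)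
    (a 0 0 * a 3 0 + a 0 1 * a 2 0 + a 0 2 * a 4 0 + a 1 0 * a 3 1 - a 1 0 ^ 2 - a 1 1 * a 3 0 - a 1 2 * a 2 0 + b 3)
    (a 0 1 * a 2 1 + a 0 1 * a 3 0 + a 0 2 * a 4 1 - a 1 0 * a 1 1 - a 1 2 * a 2 1 - b 1)
    (a 0 1 * a 2 2 + a 0 2 * a 3 0 + a 0 2 * a 4 2 - a 1 0 * a 1 2 - a 1 1 * a 3 2 - a 1 2 * a 2 2 + a 1 2 * a 3 1 + b 0)
    (a 0 0 + a 0 2 * c - a 1 1 + a 3 2)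
    (by
      simp only [map_add, map_sub, map_mul, map_neg, map_pow]
      linear_combination (-y3 - (ι (a 3 0))) * h1 + (y2 - (-ι (a 1 0) + ι (a 3 1))) * h2 + (- (ι (a 0 1) - ι (a 1 2))) * h3 + (-y1 - (-ι (a 1 1))) * h4 + (- (ι (a 0 2))) * h5)
  obtain ⟨-, e41, e42, -, eg4⟩ := hind
    (a 0 1 * b 2 * c + a 0 2 * b 4 * c - a 2 0 * b 1 - a 2 1 * b 3 - a 2 2 * b 2 + a 3 1 * b 2 + a 3 2 * b 4 + a 4 0 * b 0 + a 4 1 * b 1)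
    (a 0 0 * a 4 0 + a 0 1 * a 2 0 * c + a 0 2 * a 4 0 * c - a 1 0 * a 2 0 + a 1 0 * a 4 1 - a 2 0 * a 2 2 + a 2 0 * a 3 1 - a 2 1 * a 3 0 + a 3 2 * a 4 0 + b 4)
    (a 0 1 * a 2 1 * c + a 0 1 * a 4 0 + a 0 2 * a 4 1 * c - a 1 1 * a 2 0 + a 1 1 * a 4 1 - a 2 1 * a 2 2 + a 3 2 * a 4 1 - b 2)
    (a 0 1 * a 2 2 * c + a 0 2 * a 4 0 + a 0 2 * a 4 2 * c - a 1 2 * a 2 0 + a 1 2 * a 4 1 - a 2 1 * a 3 2 + a 2 2 * a 3 1 - a 2 2 ^ 2 + a 3 2 * a 4 2 + b 0 * c + b 3)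
    (a 0 0 * c + a 0 2 * c ^ 2 - a 2 1 + a 3 0 + a 3 2 * c + a 4 2)
    (by
      simp only [map_add, map_sub, map_mul, map_neg, map_pow]
      linear_combination (-ι c * y3 - (ι (a 4 0))) * h1 + (- (-ι (a 2 0) + ι (a 4 1))) * h2 + (y2 - (ι (a 0 1) * ι c - ι (a 2 2) + ι (a 3 1))) * h3 + (-y3 - (-ι (a 2 1))) * h4 + (-y1 - (ι (a 0 2) * ι c + ι (a 3 2))) * h5)
  obtain ⟨-, e51, e52, -, eg5⟩ := hind
    (a 1 1 * b 2 * c + a 1 2 * b 4 * c - a 2 1 * b 2 - a 2 2 * b 4 + a 4 0 * b 1 + a 4 1 * b 3 + a 4 2 * b 2)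
    (a 1 0 * a 4 0 + a 1 1 * a 2 0 * c + a 1 2 * a 4 0 * c - a 2 0 * a 2 1 + a 2 0 * a 4 2 - a 2 2 * a 4 0 + a 3 0 * a 4 1)
    (a 1 1 * a 2 1 * c + a 1 1 * a 4 0 + a 1 2 * a 4 1 * c + a 2 1 * a 4 2 - a 2 1 ^ 2 - a 2 2 * a 4 1 + a 3 1 * a 4 1 + b 4)
    (a 1 1 * a 2 2 * c + a 1 2 * a 4 0 + a 1 2 * a 4 2 * c - a 2 1 * a 2 2 + a 3 2 * a 4 1 + b 1 * c - b 2)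
    (a 1 0 * c + a 1 2 * c ^ 2 - a 2 0 - a 2 2 * c + a 4 1)
    (by
      simp only [map_add, map_sub, map_mul, map_neg, map_pow]
      linear_combination (-ι c * y3 - (ι (a 4 0))) * h2 + (y3 - (ι (a 1 1) * ι c - ι (a 2 1) + ι (a 4 2))) * h3 + (- (ι (a 4 1))) * h4 + (-y2 - (ι (a 1 2) * ι c - ι (a 2 2))) * h5)
  refine ⟨⟨?_, ?_, ?_, ?_, ?_⟩, ?_, ?_, ?_, ?_, ?_⟩
  · linear_combination eg1
  · linear_combination eg2 + c * eg1
  · linear_combination eg3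
  · linear_combination eg4 - c * eg3
  · linear_combination eg5 + c * eg2
  · linear_combination -e12
  · linear_combination e11
  · linear_combination e21
  · linear_combination e31
  · linear_combination e41

/-- A skew-symmetric `5 × 5` matrix with given entries above the diagonal. -/
def sk {R : Type} [CommRing R] (n01 n02 n03 n04 n12 n13 n14 n23 n24 n34 : R) :
    Matrix (Fin 5) (Fin 5) R :=
  !![0, n01, n02, n03, n04;
     -n01, 0, n12, n13, n14;
     -n02, -n12, 0, n23, n24;
     -n03, -n13, -n23, 0, n34;
     -n04, -n14, -n24, -n34, 0]

theorem sk_transpose {R : Type} [CommRing R] (n01 n02 n03 n04 n12 n13 n14 n23 n24 n34 : R) :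
    (sk n01 n02 n03 n04 n12 n13 n14 n23 n24 n34).transpose =
      -sk n01 n02 n03 n04 n12 n13 n14 n23 n24 n34 := by
  ext i j
  fin_cases i <;> fin_cases j <;> simp [sk]

theorem sk_pf {R : Type} [CommRing R] (n01 n02 n03 n04 n12 n13 n14 n23 n24 n34 : R) :
    subPfaffian (sk n01 n02 n03 n04 n12 n13 n14 n23 n24 n34) =
      ![n12 * n34 - n13 * n24 + n14 * n23, n02 * n34 - n03 * n24 + n04 * n23,
        n01 * n34 - n03 * n14 + n04 * n13, n01 * n24 - n02 * n14 + n04 * n12,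
        n01 * n23 - n02 * n13 + n03 * n12] := by
  ext i
  fin_cases i <;> simp [sk, subPfaffian, pfaff4, Fin.succAbove, Fin.lt_def]

/-- Every linear form matrix obtained from the structure constants. -/
def strMat {S T : Type} [CommRing S] [CommRing T] (ι : T →+* S) (y1 y2 y3 : S) (c : T)
    (a : Fin 5 → Fin 3 → T) : Matrix (Fin 5) (Fin 5) S :=
  sk (ι c * y3 + ι (a 4 0)) (-y3 - ι (a 3 0)) (ι (a 2 0)) (y2 - ι (a 1 0))
    (y2 + ι (a 1 0) - ι (a 3 1)) (-y3 + ι (a 2 1)) (-y1 + ι (a 0 0) - ι (a 1 1))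
    (y1 - ι (a 1 1)) (ι (a 0 2)) (ι (a 0 1))

theorem strMat_pf {S T : Type} [CommRing S] [CommRing T] (ι : T →+* S) (y1 y2 y3 : S) (c : T)
    (a : Fin 5 → Fin 3 → T) (b : Fin 5 → T)
    (h : (a 1 2 = a 0 1 ∧ a 2 2 = a 1 0 + c * a 0 1 ∧ a 3 2 = a 1 1 - a 0 0 - c * a 0 2 ∧
      a 4 2 = a 2 1 - a 3 0 - c * a 1 1 ∧ a 4 1 = a 2 0) ∧
    (b 0 = -a 0 0 * a 1 1 + a 0 1 * a 1 0 - a 0 1 * a 3 1 - a 0 2 * a 2 1 + a 1 1 ^ 2 ∧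
      b 1 = a 0 1 * a 3 0 + a 0 2 * a 2 0 - a 1 0 * a 1 1 ∧
      b 2 = -a 0 0 * a 2 0 - a 1 0 * a 2 1 + a 1 1 * a 2 0 + a 1 2 * a 4 0 ∧
      b 3 = -a 0 0 * a 3 0 - a 0 1 * a 2 0 - a 0 2 * a 4 0 - a 1 0 * a 3 1 + a 1 0 ^ 2 + a 1 1 * a 3 0 + a 1 2 * a 2 0 ∧
      b 4 = -a 0 0 * a 4 0 - a 0 1 * a 2 0 * c - a 0 2 * a 4 0 * c + a 1 0 * a 2 0 - a 1 0 * a 4 1 + a 2 0 * a 2 2 - a 2 0 * a 3 1 + a 2 1 * a 3 0 - a 3 2 * a 4 0)) :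
    subPfaffian (strMat ι y1 y2 y3 c a) =
      ![-(y1 * y1 - (ι (a 0 0) * y1 + ι (a 0 1) * y2 + ι (a 0 2) * y3 + ι (b 0))),
        y1 * y2 - (ι (a 1 0) * y1 + ι (a 1 1) * y2 + ι (a 1 2) * y3 + ι (b 1)),
        -(y2 * y3 - (ι (a 2 0) * y1 + ι (a 2 1) * y2 + ι (a 2 2) * y3 + ι (b 2))),
        y2 * y2 - (y1 * y3 + ι (a 3 0) * y1 + ι (a 3 1) * y2 + ι (a 3 2) * y3 + ι (b 3)),
        -(y3 * y3 - (ι c * (y1 * y3) + ι (a 4 0) * y1 + ι (a 4 1) * y2 + ι (a 4 2) * y3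
          + ι (b 4)))] := by
  obtain ⟨⟨g1, g2, g3, g4, g5⟩, k1, k2, k3, k4, k5⟩ := h
  rw [strMat, sk_pf, k1, k2, k3, k4, k5, g1, g2, g3, g4, g5]
  simp only [map_add, map_sub, map_mul, map_neg, map_pow]
  ext i
  fin_cases i <;> simp <;> ring

theorem sk_koszul {R : Type} [CommRing R] (M : Matrix (Fin 5) (Fin 5) R)
    (n01 n02 n03 n04 n12 n13 n14 n23 n24 n34 : R)
    (hM : M = sk n01 n02 n03 n04 n12 n13 n14 n23 n24 n34) (v : Fin 5 → R)
    (h : M.mulVec v = 0) (j : Fin 5) :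
    v j * subPfaffian M 1 = - (-1) ^ (j : ℕ) * (v 1 * subPfaffian M j) := by
  subst hM
  have h0 := congrFun h 0
  have h1 := congrFun h 1
  have h2 := congrFun h 2
  have h3 := congrFun h 3
  have h4 := congrFun h 4
  simp [sk, Matrix.mulVec, dotProduct, Fin.sum_univ_five] at h0 h1 h2 h3 h4
  rw [sk_pf]
  fin_cases j
  · simp
    linear_combination -n34 * h2 + n24 * h3 - n23 * h4
  · simp
  · simp
    linear_combination n34 * h0 - n04 * h3 + n03 * h4
  · simp
    linear_combination -n24 * h0 + n04 * h2 - n02 * h4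
  · simp
    linear_combination n23 * h0 - n03 * h2 + n02 * h3

theorem sk_syz {R : Type} [CommRing R]
    (n01 n02 n03 n04 n12 n13 n14 n23 n24 n34 : R) :
    (sk n01 n02 n03 n04 n12 n13 n14 n23 n24 n34).mulVec
      (fun j => (-1) ^ (j : ℕ) * subPfaffian (sk n01 n02 n03 n04 n12 n13 n14 n23 n24 n34) j) = 0 := by
  rw [sk_pf]
  ext i
  fin_cases i <;> simp [sk, Matrix.mulVec, dotProduct, Fin.sum_univ_five] <;> ring

end AMD

namespace AMD

/-- `x` is a nonzerodivisor modulo `J`. -/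
def Nzd {S : Type} [CommRing S] (J : Ideal S) (x : S) : Prop := ∀ y, x * y ∈ J → y ∈ J

/-- `xs` is a (weakly) regular sequence modulo `J`. -/
def RegOn {S : Type} [CommRing S] : Ideal S → List S → Prop
  | _, [] => True
  | J, x :: xs => Nzd J x ∧ RegOn (J ⊔ Ideal.span {x}) xs

/-- `l` is a nonzerodivisor modulo all initial segments. -/
def AllNzd {S : Type} [CommRing S] (l : S) : Ideal S → List S → Prop
  | _, [] => True
  | J, x :: xs => Nzd J l ∧ AllNzd l (J ⊔ Ideal.span {x}) xs

theorem regOn_iff {S : Type} [CommRing S] (xs : List S) : ∀ (J : Ideal S),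
    RegOn J xs ↔ ∀ i : Fin xs.length, Nzd (J ⊔ Ideal.span {x | x ∈ xs.take i.1}) (xs.get i) := by
  induction xs with
  | nil => intro J; simp [RegOn]
  | cons x xs ih =>
    intro J
    rw [RegOn, ih]
    constructor
    · rintro ⟨h1, h2⟩ i
      refine Fin.cases ?_ (fun j => ?_) i
      · simpa using h1
      · have := h2 j
        have e : J ⊔ Ideal.span {x_1 | x_1 ∈ List.take (↑j.succ) (x :: xs)} =
          J ⊔ Ideal.span {x} ⊔ Ideal.span {x | x ∈ List.take (↑j) xs} := by
          rw [sup_assoc, ← Ideal.span_union]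
          congr 2
          ext z
          simp
        rw [e]
        simpa using this
    · intro h
      refine ⟨by simpa using h ⟨0, by simp⟩, fun j => ?_⟩
      have := h j.succ
      have e : J ⊔ Ideal.span {x_1 | x_1 ∈ List.take (↑j.succ) (x :: xs)} =
          J ⊔ Ideal.span {x} ⊔ Ideal.span {x | x ∈ List.take (↑j) xs} := by
          rw [sup_assoc, ← Ideal.span_union]
          congr 2
          ext z
          simp
      rw [e] at this
      simpa using this

theorem mk_mem_span_list {S : Type} [CommRing S] (I : Ideal S) (xs : List S) (y : S) :
    Ideal.Quotient.mk I y ∈ Ideal.span {x | x ∈ xs.map (Ideal.Quotient.mk I)} ↔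
      y ∈ I ⊔ Ideal.span {x | x ∈ xs} := by
  have : {x | x ∈ xs.map (Ideal.Quotient.mk I)} = Ideal.Quotient.mk I '' {x | x ∈ xs} := by
    ext z; simp
  rw [this, ← Ideal.map_span, ← Ideal.mem_comap,
    Ideal.comap_map_of_surjective _ Ideal.Quotient.mk_surjective, sup_comm,
    ← RingHom.ker_eq_comap_bot, Ideal.mk_ker]

theorem isRegSeq_iff {S : Type} [CommRing S] (I : Ideal S) (xs : List S) :
    IsRegSeq (xs.map (Ideal.Quotient.mk I)) ↔ RegOn I xs := by
  rw [regOn_iff]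
  constructor
  · intro h i y hy
    have h2 := h ⟨i.1, by simp⟩ (Ideal.Quotient.mk I y)
    simp only [← List.map_take, mk_mem_span_list] at h2
    apply h2
    have : (xs.map (Ideal.Quotient.mk I)).get ⟨i.1, by simp⟩ = Ideal.Quotient.mk I (xs.get i) := by
      simp
    rw [this, ← map_mul, mk_mem_span_list]
    exact hy
  · intro h i y hy
    obtain ⟨y, rfl⟩ := Ideal.Quotient.mk_surjective y
    have h2 := h ⟨i.1, by simpa using i.2⟩ y
    simp only [← List.map_take, mk_mem_span_list]
    apply h2
    have : (xs.map (Ideal.Quotient.mk I)).get i = Ideal.Quotient.mk I (xs.get ⟨i.1, by simpa using i.2⟩) := by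
      simp
    rw [this, ← map_mul] at hy
    simp only [← List.map_take, mk_mem_span_list] at hy
    exact hy

theorem regOn_exchange {S : Type} [CommRing S] (l : S) (xs : List S) : ∀ (x : S) (J : Ideal S),
    RegOn J (x :: xs) → AllNzd l J (x :: xs) → RegOn (J ⊔ Ideal.span {l}) (x :: xs).dropLast := by
  induction xs with
  | nil => intro x J _ _; simp [RegOn]
  | cons x' xs ih =>
    intro x J h1 h2
    have h3 := ih x' (J ⊔ Ideal.span {x}) h1.2 h2.2
    rw [List.dropLast_cons_cons, RegOn]
    refine ⟨?_, ?_⟩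
    · intro y hy
      rw [Submodule.mem_sup] at hy
      obtain ⟨j, hj, w, hw, e⟩ := hy
      obtain ⟨z, rfl⟩ := Ideal.mem_span_singleton'.1 hw
      have hz : z ∈ J ⊔ Ideal.span {x} := by
        apply h2.2.1
        rw [Submodule.mem_sup]
        exact ⟨-j, J.neg_mem hj, y * x, Ideal.mem_span_singleton'.2 ⟨y, rfl⟩, by
          linear_combination -e⟩
      rw [Submodule.mem_sup] at hz
      obtain ⟨j', hj', w, hw', e'⟩ := hz
      obtain ⟨u, rfl⟩ := Ideal.mem_span_singleton'.1 hw'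
      have : y - l * u ∈ J := by
        apply h1.1
        have : x * (y - l * u) = j + j' * l := by
          linear_combination -e - l * e'
        rw [this]
        exact J.add_mem hj (J.mul_mem_right _ hj')
      rw [Submodule.mem_sup]
      exact ⟨_, this, u * l, Ideal.mem_span_singleton'.2 ⟨u, rfl⟩, by ring⟩
    · rw [sup_right_comm]
      exact h3

variable {K : Type} [Field K] {r : ℕ}

/-- The irrelevant ideal of `S`. -/
def irr (K : Type) [Field K] (r : ℕ) : Ideal (PS K r) :=
  Ideal.span (Set.range (X : Fin (r + 1) → PS K r))

theorem exists_common_nzd [Infinite K] (Js : List (Ideal (PS K r)))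
    (h : ∀ J ∈ Js, ∃ x ∈ irr K r, Nzd J x) :
    ∃ l : PS K r, l.IsHomogeneous 1 ∧ ∀ J ∈ Js, Nzd J l := by
  classical
  let V := homogeneousSubmodule (Fin (r + 1)) K 1
  have hf : (⋃ J ∈ Js, associatedPrimes (PS K r) (PS K r ⧸ J)).Finite :=
    Set.Finite.biUnion (List.finite_toSet Js) (fun J _ => associatedPrimes.finite _ _)
  let f : Ideal (PS K r) → Subspace K V := fun P =>
    (P.restrictScalars K).comap V.subtype
  have key := Subspace.biUnion_ne_univ_of_top_notMem (s := hf.toFinset.image f) (by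
    intro ht
    rw [Finset.mem_image] at ht
    obtain ⟨P, hP, e⟩ := ht
    simp only [Set.Finite.mem_toFinset, Set.mem_iUnion] at hP
    obtain ⟨J, hJ, hP⟩ := hP
    obtain ⟨x, hx, hx2⟩ := h J hJ
    have hirr : irr K r ≤ P := by
      rw [irr, Ideal.span_le]
      rintro _ ⟨i, rfl⟩
      have : (⟨X i, isHomogeneous_X K i⟩ : V) ∈ f P := by rw [e]; trivial
      exact this
    have hxP := hirr hx
    have : x ∈ ⋃ p ∈ associatedPrimes (PS K r) (PS K r ⧸ J), (p : Set (PS K r)) := by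
      simp only [Set.mem_iUnion]
      exact ⟨P, hP, hxP⟩
    rw [biUnion_associatedPrimes_eq_zero_divisors] at this
    obtain ⟨z, hz, hz2⟩ := this
    obtain ⟨z, rfl⟩ := Ideal.Quotient.mk_surjective z
    apply hz
    rw [Ideal.Quotient.eq_zero_iff_mem]
    apply hx2
    rw [← Ideal.Quotient.eq_zero_iff_mem, map_mul]
    exact hz2)
  obtain ⟨l, hl⟩ := (Set.ne_univ_iff_exists_notMem _).1 key
  refine ⟨l.1, l.2, fun J hJ => ?_⟩
  intro y hy
  by_contra hyJ
  apply hl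
  have : l.1 ∈ ⋃ p ∈ associatedPrimes (PS K r) (PS K r ⧸ J), (p : Set (PS K r)) := by
    rw [biUnion_associatedPrimes_eq_zero_divisors]
    refine ⟨Ideal.Quotient.mk J y, ?_, ?_⟩
    · rwa [Ne, Ideal.Quotient.eq_zero_iff_mem]
    · have := Ideal.Quotient.eq_zero_iff_mem.2 hy
      rw [map_mul] at this
      exact this
  simp only [Set.mem_iUnion] at this ⊢
  obtain ⟨P, hP, hl⟩ := this
  refine ⟨f P, ?_, hl⟩
  apply Finset.mem_image_of_mem
  simp only [Set.Finite.mem_toFinset, Set.mem_iUnion]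
  exact ⟨J, hJ, hP⟩

/-- list of the partial ideals -/
def partials {S : Type} [CommRing S] : Ideal S → List S → List (Ideal S)
  | _, [] => []
  | J, x :: xs => J :: partials (J ⊔ Ideal.span {x}) xs

theorem allNzd_of_partials {S : Type} [CommRing S] (l : S) (xs : List S) : ∀ J : Ideal S,
    (∀ J' ∈ partials J xs, Nzd J' l) → AllNzd l J xs := by
  induction xs with
  | nil => intro J _; trivial
  | cons x xs ih =>
    intro J h
    exact ⟨h J (by simp [partials]), ih _ fun J' hJ' => h J' (by simp [partials, hJ'])⟩

theorem partials_nzd {S : Type} [CommRing S] (m : Ideal S) (xs : List S) : ∀ J : Ideal S,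
    (∀ x ∈ xs, x ∈ m) → RegOn J xs → ∀ J' ∈ partials J xs, ∃ x ∈ m, Nzd J' x := by
  induction xs with
  | nil => intro J _ _ J' h; simp [partials] at h
  | cons x xs ih =>
    intro J hm h J' hJ'
    rw [partials, List.mem_cons] at hJ'
    rcases hJ' with rfl | hJ'
    · exact ⟨x, hm x (by simp), h.1⟩
    · exact ih _ (fun z hz => hm z (by simp [hz])) h.2 J' hJ'

theorem exists_linear_regOn [Infinite K] (n : ℕ) : ∀ (J : Ideal (PS K r)) (xs : List (PS K r)),
    xs.length = n → (∀ x ∈ xs, x ∈ irr K r) → RegOn J xs →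
    ∃ ls : List (PS K r), ls.length = n ∧ (∀ l ∈ ls, l.IsHomogeneous 1) ∧ RegOn J ls := by
  induction n with
  | zero => intro J xs _ _ _; exact ⟨[], rfl, by simp, trivial⟩
  | succ n ih =>
    intro J xs hlen hm hreg
    obtain ⟨l, hl1, hl2⟩ := exists_common_nzd (partials J xs) (partials_nzd _ xs J hm hreg)
    have hall := allNzd_of_partials l xs J hl2
    match xs, hlen, hm, hreg, hall with
    | x :: xs, hlen, hm, hreg, hall =>
      have h3 := regOn_exchange l xs x J hreg hall
      obtain ⟨ls, h4, h5, h6⟩ := ih _ _ (by simp at hlen ⊢; exact hlen)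
        (fun z hz => hm z (List.mem_of_mem_dropLast hz)) h3
      refine ⟨l :: ls, by simp [h4], ?_, hall.1, h6⟩
      intro z hz
      rw [List.mem_cons] at hz
      rcases hz with rfl | hz
      · exact hl1
      · exact h5 z hz

theorem exists_lift_list (I : Ideal (PS K r)) (rs : List (PS K r ⧸ I))
    (h : ∀ x ∈ rs, x ∈ maxIdl K r I) :
    ∃ xs : List (PS K r), xs.map (Ideal.Quotient.mk I) = rs ∧ ∀ x ∈ xs, x ∈ irr K r := by
  induction rs with
  | nil => exact ⟨[], rfl, by simp⟩
  | cons x rs ih =>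
    obtain ⟨xs, h1, h2⟩ := ih fun z hz => h z (by simp [hz])
    obtain ⟨x', h3, rfl⟩ := (Ideal.mem_map_iff_of_surjective _
      Ideal.Quotient.mk_surjective).1 (h x (by simp))
    refine ⟨x' :: xs, by simp [h1], ?_⟩
    intro z hz
    rw [List.mem_cons] at hz
    rcases hz with rfl | hz
    · exact h3
    · exact h2 z hz

/-- Existence of a regular sequence of linear forms of maximal length. -/
theorem exists_linear_regular [Infinite K] (I : Ideal (PS K r)) (t : ℕ) (h : DepthEq K r I t) :
    ∃ ls : List (PS K r), ls.length = t ∧ (∀ l ∈ ls, l.IsHomogeneous 1) ∧ RegOn I ls := by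
  obtain ⟨⟨rs, h1, h2, h3⟩, -⟩ := h
  obtain ⟨xs, rfl, h5⟩ := exists_lift_list I rs h2
  rw [isRegSeq_iff] at h3
  exact exists_linear_regOn t I xs (by simpa using h1) h5 h3

end AMD

namespace AMD

theorem eval_divX {R S : Type} [CommRing R] [CommRing S] (φ : R →+* S) (l : S)
    (p : Polynomial R) : p.eval₂ φ l = p.divX.eval₂ φ l * l + φ (p.coeff 0) := by
  conv_lhs => rw [← Polynomial.divX_mul_X_add p]
  simp

theorem indep_step {R S ι : Type} [CommRing R] [CommRing S] [Fintype ι] (φ : R →+* S) (l : S)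
    (J : Ideal S) (hl : Nzd J l) (b : ι → S)
    (hind : ∀ p : ι → R, ∑ i, φ (p i) * b i ∈ J ⊔ Ideal.span {l} → ∀ i, p i = 0)
    (p : ι → Polynomial R) (hp : ∑ i, (p i).eval₂ φ l * b i ∈ J) : ∀ i, p i = 0 := by
  have key : ∀ (k : ℕ) (p : ι → Polynomial R), ∑ i, (p i).eval₂ φ l * b i ∈ J →
      ∀ i, (p i).coeff k = 0 := by
    intro k
    induction k with
    | zero =>
      intro p hp
      apply hind
      have e : ∑ i, φ ((p i).coeff 0) * b i =
          ∑ i, (p i).eval₂ φ l * b i + (-∑ i, ((p i).divX).eval₂ φ l * b i) * l := by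
        rw [neg_mul, Finset.sum_mul, ← sub_eq_add_neg, ← Finset.sum_sub_distrib]
        refine Finset.sum_congr rfl fun i _ => ?_
        linear_combination (-b i) * eval_divX φ l (p i)
      rw [e]
      exact Submodule.add_mem_sup hp (Ideal.mem_span_singleton'.2 ⟨_, rfl⟩)
    | succ k ih =>
      intro p hp i
      have h0 : ∀ i, (p i).coeff 0 = 0 := by
        apply hind
        have e : ∑ i, φ ((p i).coeff 0) * b i =
          ∑ i, (p i).eval₂ φ l * b i + (-∑ i, ((p i).divX).eval₂ φ l * b i) * l := by
          rw [neg_mul, Finset.sum_mul, ← sub_eq_add_neg, ← Finset.sum_sub_distrib]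
          refine Finset.sum_congr rfl fun i _ => ?_
          linear_combination (-b i) * eval_divX φ l (p i)
        rw [e]
        exact Submodule.add_mem_sup hp (Ideal.mem_span_singleton'.2 ⟨_, rfl⟩)
      rw [← Polynomial.coeff_divX]
      apply ih (fun i => (p i).divX)
      apply hl
      convert hp using 1
      rw [Finset.mul_sum]
      refine Finset.sum_congr rfl fun i _ => ?_
      conv_rhs => rw [← Polynomial.divX_mul_X_add (p i)]
      simp [h0]
      ring
  intro i
  ext k
  simpa using key k p hp i

/-- The coefficient ring `T`. -/
theorem exists_coeff_ring {K S : Type} [Field K] [CommRing S] [Algebra K S] (ls : List S) :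
    ∀ J : Ideal S, RegOn J ls →
    ∃ (T : Type) (_ : CommRing T) (_ : IsDomain T) (_ : Algebra K T) (ι : T →ₐ[K] S),
      (∀ l ∈ ls, ∃ τ, ι τ = l) ∧
      ∀ b : Fin 5 → S,
        (∀ p : Fin 5 → K, ∑ i, algebraMap K S (p i) * b i ∈ J ⊔ Ideal.span {x | x ∈ ls} →
          ∀ i, p i = 0) →
        ∀ p : Fin 5 → T, ∑ i, ι (p i) * b i ∈ J → ∀ i, p i = 0 := by
  induction ls with
  | nil =>
    intro J _
    refine ⟨K, inferInstance, inferInstance, inferInstance, Algebra.ofId K S, by simp, ?_⟩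
    intro b hb p hp
    apply hb p
    simpa using hp
  | cons x xs ih =>
    intro J h
    obtain ⟨T, i1, i2, i3, ι, h1, h2⟩ := ih _ h.2
    refine ⟨Polynomial T, inferInstance, inferInstance, inferInstance,
      { Polynomial.eval₂RingHom (ι : T →+* S) x with
        commutes' := fun k => by
          simp [Polynomial.algebraMap_apply] }, ?_, ?_⟩
    · intro l hl
      rw [List.mem_cons] at hl
      rcases hl with rfl | hl
      · exact ⟨Polynomial.X, by simp⟩
      · obtain ⟨τ, rfl⟩ := h1 l hl
        exact ⟨Polynomial.C τ, by simp⟩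
    · intro b hb
      have h3 := h2 b (by
        intro p hp
        apply hb p
        convert hp using 1
        rw [sup_assoc, ← Ideal.span_union]
        congr 2
        ext z; simp)
      exact indep_step (ι : T →+* S) x J h.1 b h3

end AMD

namespace AMD
variable {K : Type} [Field K] {r : ℕ}

/-- graded piece of `S` -/
abbrev gr (K : Type) [Field K] (r n : ℕ) : Submodule K (PS K r) :=
  homogeneousSubmodule (Fin (r + 1)) K n

instance gr_finite (n : ℕ) : Module.Finite K (gr K r n) :=
  Module.Finite.iff_fg.2 (homogeneousSubmodule_fg _ _ n)

instance quot_finite (I : Ideal (PS K r)) (n : ℕ) : Module.Finite K (quotComponent K r I n) :=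
  Module.Finite.iff_fg.2 ((homogeneousSubmodule_fg _ _ n).map _)

theorem comp_mul {g : PS K r} {k : ℕ} (hg : g.IsHomogeneous k) (f : PS K r) (n : ℕ) :
    homogeneousComponent (n + k) (f * g) = homogeneousComponent n f * g := by
  conv_lhs => rw [← sum_homogeneousComponent f]
  conv_rhs => rw [← sum_homogeneousComponent f]
  rw [Finset.sum_mul, map_sum, map_sum, Finset.sum_mul]
  refine Finset.sum_congr rfl fun i _ => ?_
  have h1 := homogeneousComponent_isHomogeneous i f
  rw [homogeneousComponent_of_mem (h1.mul hg), homogeneousComponent_of_mem h1]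
  by_cases h : n = i
  · simp [h]
  · simp [h]

theorem comp_mul_lt {g : PS K r} {k : ℕ} (hg : g.IsHomogeneous k) (f : PS K r) (n : ℕ)
    (hn : n < k) : homogeneousComponent n (f * g) = 0 := by
  conv_lhs => rw [← sum_homogeneousComponent f]
  rw [Finset.sum_mul, map_sum]
  refine Finset.sum_eq_zero fun i _ => ?_
  have h1 := homogeneousComponent_isHomogeneous i f
  rw [homogeneousComponent_of_mem (h1.mul hg)]
  rw [if_neg (by omega)]

theorem isHom_sup {I J : Ideal (PS K r)} (hI : IsHomIdeal K r I) (hJ : IsHomIdeal K r J) :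
    IsHomIdeal K r (I ⊔ J) := by
  intro p hp n
  obtain ⟨a, ha, b, hb, rfl⟩ := Submodule.mem_sup.1 hp
  rw [map_add]
  exact Submodule.add_mem_sup (hI a ha n) (hJ b hb n)

theorem isHom_span {l : PS K r} {k : ℕ} (hl : l.IsHomogeneous k) :
    IsHomIdeal K r (Ideal.span {l}) := by
  intro p hp n
  obtain ⟨a, rfl⟩ := Ideal.mem_span_singleton'.1 hp
  by_cases h : n < k
  · rw [comp_mul_lt hl a n h]; exact zero_mem _
  · obtain ⟨m, rfl⟩ := Nat.exists_eq_add_of_le' (not_lt.1 h)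
    rw [comp_mul hl]
    exact Ideal.mem_span_singleton'.2 ⟨_, rfl⟩

theorem mem_quotComponent (I : Ideal (PS K r)) (n : ℕ) (x : PS K r ⧸ I) :
    x ∈ quotComponent K r I n ↔ ∃ f : PS K r, f.IsHomogeneous n ∧ Ideal.Quotient.mk I f = x := by
  simp [quotComponent, Submodule.mem_map]

theorem mem_sup_span_hom {J : Ideal (PS K r)} {l : PS K r} (hJ : IsHomIdeal K r J)
    (hl : l.IsHomogeneous 1) {f : PS K r} {n : ℕ} (hf : f.IsHomogeneous (n + 1))
    (h : f ∈ J ⊔ Ideal.span {l}) :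
    ∃ j ∈ J, j.IsHomogeneous (n + 1) ∧ ∃ g : PS K r, g.IsHomogeneous n ∧ f = j + l * g := by
  obtain ⟨j, hj, b, hb, e⟩ := Submodule.mem_sup.1 h
  obtain ⟨g, rfl⟩ := Ideal.mem_span_singleton'.1 hb
  refine ⟨homogeneousComponent (n + 1) j, hJ j hj _, homogeneousComponent_isHomogeneous _ _,
    homogeneousComponent n g, homogeneousComponent_isHomogeneous _ _, ?_⟩
  rw [← homogeneousComponent_eq_self hf, ← e, map_add, comp_mul hl, mul_comm l]

theorem finrank_map_add {V W : Type*} [AddCommGroup V] [Module K V] [AddCommGroup W] [Module K W]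
    (f : V →ₗ[K] W) (U : Submodule K V) [Module.Finite K U] :
    Module.finrank K (U.map f) + Module.finrank K (U ⊓ LinearMap.ker f : Submodule K V) =
      Module.finrank K U := by
  rw [← LinearMap.finrank_range_add_finrank_ker (f.domRestrict U)]
  congr 1
  · rw [LinearMap.range_domRestrict]
  · rw [LinearMap.ker_domRestrict]
    have : U ⊓ LinearMap.ker f = ((LinearMap.ker f).comap U.subtype).map U.subtype := by
      rw [Submodule.map_comap_subtype]
    rw [this]
    exact (LinearEquiv.finrank_eq (Submodule.equivMapOfInjective _ U.injective_subtype _)).symm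

theorem quot_factor {J J' : Ideal (PS K r)} (hle : J ≤ J') (n : ℕ) :
    quotComponent K r J' n =
      (quotComponent K r J n).map (Ideal.Quotient.factorₐ K hle).toLinearMap := by
  ext x
  rw [mem_quotComponent, Submodule.mem_map]
  constructor
  · rintro ⟨f, hf, rfl⟩
    exact ⟨Ideal.Quotient.mk J f, (mem_quotComponent _ _ _).2 ⟨f, hf, rfl⟩, rfl⟩
  · rintro ⟨y, hy, rfl⟩
    obtain ⟨f, hf, rfl⟩ := (mem_quotComponent _ _ _).1 hy
    exact ⟨f, hf, rfl⟩

theorem hilb_zero {J : Ideal (PS K r)} {l : PS K r} (hJ : IsHomIdeal K r J)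
    (hl : l.IsHomogeneous 1) :
    Module.finrank K (quotComponent K r (J ⊔ Ideal.span {l}) 0) =
      Module.finrank K (quotComponent K r J 0) := by
  have hle : J ≤ J ⊔ Ideal.span {l} := le_sup_left
  rw [quot_factor hle, ← finrank_map_add (Ideal.Quotient.factorₐ K hle).toLinearMap
    (quotComponent K r J 0)]
  suffices h : quotComponent K r J 0 ⊓ LinearMap.ker (Ideal.Quotient.factorₐ K hle).toLinearMap = ⊥ by
    rw [h]; simp
  rw [eq_bot_iff]
  rintro x ⟨hx, hx2⟩
  obtain ⟨f, hf, rfl⟩ := (mem_quotComponent _ _ _).1 hx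
  have h2 : f ∈ J ⊔ Ideal.span {l} := Ideal.Quotient.eq_zero_iff_mem.1 hx2
  obtain ⟨j, hj, b, hb, e⟩ := Submodule.mem_sup.1 h2
  obtain ⟨g, rfl⟩ := Ideal.mem_span_singleton'.1 hb
  rw [Submodule.mem_bot, Ideal.Quotient.eq_zero_iff_mem, ← homogeneousComponent_eq_self hf, ← e,
    map_add, comp_mul_lt hl _ _ one_pos, add_zero]
  exact hJ j hj 0

theorem hilb_succ {J : Ideal (PS K r)} {l : PS K r} (hJ : IsHomIdeal K r J)
    (hl : l.IsHomogeneous 1) (hreg : Nzd J l) (n : ℕ) :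
    Module.finrank K (quotComponent K r (J ⊔ Ideal.span {l}) (n + 1)) +
      Module.finrank K (quotComponent K r J n) =
      Module.finrank K (quotComponent K r J (n + 1)) := by
  have hle : J ≤ J ⊔ Ideal.span {l} := le_sup_left
  rw [quot_factor hle, ← finrank_map_add (Ideal.Quotient.factorₐ K hle).toLinearMap
    (quotComponent K r J (n + 1))]
  congr 1
  have hinj : Function.Injective (LinearMap.mulLeft K (Ideal.Quotient.mk J l)) := by
    rw [← LinearMap.ker_eq_bot, eq_bot_iff]
    intro x hx
    obtain ⟨y, rfl⟩ := Ideal.Quotient.mk_surjective x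
    have hx : Ideal.Quotient.mk J l * Ideal.Quotient.mk J y = 0 := hx
    rw [← map_mul, Ideal.Quotient.eq_zero_iff_mem] at hx
    rw [Submodule.mem_bot, Ideal.Quotient.eq_zero_iff_mem]
    exact hreg y hx
  rw [LinearEquiv.finrank_eq (Submodule.equivMapOfInjective _ hinj (quotComponent K r J n))]
  suffices h : (quotComponent K r J n).map (LinearMap.mulLeft K (Ideal.Quotient.mk J l)) =
    quotComponent K r J (n + 1) ⊓ LinearMap.ker (Ideal.Quotient.factorₐ K hle).toLinearMap by
    rw [h]
  ext x
  rw [Submodule.mem_map, Submodule.mem_inf]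
  constructor
  · rintro ⟨y, hy, rfl⟩
    obtain ⟨g, hg, rfl⟩ := (mem_quotComponent _ _ _).1 hy
    constructor
    · refine (mem_quotComponent _ _ _).2 ⟨g * l, hg.mul hl, ?_⟩
      rw [mul_comm]; simp
    · rw [LinearMap.mem_ker]
      rw [LinearMap.mulLeft_apply, ← map_mul]
      change Ideal.Quotient.mk (J ⊔ Ideal.span {l}) (l * g) = 0
      rw [Ideal.Quotient.eq_zero_iff_mem]
      exact Ideal.mul_mem_right _ _ (Submodule.mem_sup_right (Ideal.mem_span_singleton_self l))
  · rintro ⟨hx, hx2⟩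
    obtain ⟨f, hf, rfl⟩ := (mem_quotComponent _ _ _).1 hx
    have h2 : f ∈ J ⊔ Ideal.span {l} := Ideal.Quotient.eq_zero_iff_mem.1 hx2
    obtain ⟨j, hj, -, g, hg, rfl⟩ := mem_sup_span_hom hJ hl hf h2
    refine ⟨Ideal.Quotient.mk J g, (mem_quotComponent _ _ _).2 ⟨g, hg, rfl⟩, ?_⟩
    rw [LinearMap.mulLeft_apply, map_add, Ideal.Quotient.eq_zero_iff_mem.2 hj, zero_add, map_mul]

theorem hilb_step {J : Ideal (PS K r)} {l : PS K r} (hJ : IsHomIdeal K r J)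
    (hl : l.IsHomogeneous 1) (hreg : Nzd J l) :
    hilbSeries K r (J ⊔ Ideal.span {l}) = hilbSeries K r J * (1 - PowerSeries.X) := by
  ext n
  rw [mul_sub, mul_one, map_sub]
  cases n with
  | zero => simp [hilbSeries, hilb_zero hJ hl]
  | succ n =>
    rw [PowerSeries.coeff_succ_mul_X]
    simp only [hilbSeries, PowerSeries.coeff_mk]
    have := hilb_succ hJ hl hreg n
    omega

theorem hilb_list (ls : List (PS K r)) : ∀ J : Ideal (PS K r), IsHomIdeal K r J →
    (∀ l ∈ ls, l.IsHomogeneous 1) → RegOn J ls →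
    IsHomIdeal K r (J ⊔ Ideal.span {x | x ∈ ls}) ∧
    hilbSeries K r (J ⊔ Ideal.span {x | x ∈ ls}) =
      hilbSeries K r J * (1 - PowerSeries.X) ^ ls.length := by
  induction ls with
  | nil =>
    intro J hJ _ _
    have : ({x | x ∈ ([] : List (PS K r))} : Set (PS K r)) = ∅ := by ext; simp
    rw [this, Ideal.span_empty, sup_bot_eq]
    exact ⟨hJ, by simp⟩
  | cons l ls ih =>
    intro J hJ hls hreg
    obtain ⟨h1, h2⟩ := hreg
    have hl := hls l (by simp)
    have : J ⊔ Ideal.span {x | x ∈ l :: ls} =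
        (J ⊔ Ideal.span {l}) ⊔ Ideal.span {x | x ∈ ls} := by
      rw [sup_assoc, ← Ideal.span_union]
      congr 2
      ext; simp
    rw [this]
    obtain ⟨h3, h4⟩ := ih (J ⊔ Ideal.span {l}) (isHom_sup hJ (isHom_span hl))
      (fun x hx => hls x (by simp [hx])) h2
    refine ⟨h3, ?_⟩
    rw [h4, hilb_step hJ hl h1, List.length_cons, pow_succ']
    ring

theorem quot_add (J : Ideal (PS K r)) (n : ℕ) :
    Module.finrank K (quotComponent K r J n) +
      Module.finrank K (gr K r n ⊓ J.restrictScalars K : Submodule K (PS K r)) =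
      Module.finrank K (gr K r n) := by
  rw [← finrank_map_add (Ideal.Quotient.mkₐ K J).toLinearMap (gr K r n)]
  suffices h : gr K r n ⊓ J.restrictScalars K =
      gr K r n ⊓ LinearMap.ker (Ideal.Quotient.mkₐ K J).toLinearMap by
    rw [h]; rfl
  ext x
  simp [Ideal.Quotient.eq_zero_iff_mem]

theorem finrank_gr (n : ℕ) : Module.finrank K (gr K r n) = (r + n).choose r := by
  rw [gr, homogeneousSubmodule_eq_finsupp_supported]
  have e : ({d | d.degree = n} : Set (Fin (r + 1) →₀ ℕ)) =
      ((Finset.finsuppAntidiag Finset.univ n : Finset (Fin (r + 1) →₀ ℕ)) : Set _) := by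
    ext d
    simp [Finset.mem_finsuppAntidiag, Finsupp.degree_eq_sum]
  rw [e]
  rw [LinearEquiv.finrank_eq (AddMonoidAlgebra.supportedEquivFinsupp (R := K) (S := K) _)]
  rw [Module.finrank_finsupp_self]
  simp only [Finset.coe_sort_coe, Fintype.card_coe]
  rw [Finset.card_finsuppAntidiag_nat_eq_choose, Finset.card_univ, Fintype.card_fin]
  rw [show r + 1 + n - 1 = r + n by omega]
  exact (Nat.choose_symm_of_eq_add (by omega))

theorem hilb_S : (PowerSeries.mk fun n => (Module.finrank K (gr K r n) : ℤ)) *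
    (1 - PowerSeries.X) ^ (r + 1) = 1 := by
  have : (PowerSeries.mk fun n => (Module.finrank K (gr K r n) : ℤ)) =
      (PowerSeries.mk 1) ^ (r + 1) := by
    rw [PowerSeries.mk_one_pow_eq_mk_choose_add]
    ext n
    simp [finrank_gr]
  rw [this, ← mul_pow, PowerSeries.mk_one_mul_one_sub_eq_one, one_pow]

end AMD

namespace AMD
variable {K : Type} [Field K] {r : ℕ}

theorem gr_succ_le {N : Ideal (PS K r)} {n : ℕ} (h : ∀ f : PS K r, f.IsHomogeneous n → f ∈ N)
    (f : PS K r) (hf : f.IsHomogeneous (n + 1)) : f ∈ N := by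
  rw [f.as_sum]
  refine Ideal.sum_mem _ fun d hd => ?_
  have hdeg : d.degree = n + 1 := by
    have := hf (mem_support_iff.1 hd)
    rwa [Finsupp.degree_eq_weight_one]
  have hne : d ≠ 0 := by
    rintro rfl
    simp at hdeg
  obtain ⟨i, hi⟩ := Finsupp.support_nonempty_iff.2 hne
  have hi' : Finsupp.single i 1 ≤ d := by
    rw [Finsupp.single_le_iff]
    exact Nat.one_le_iff_ne_zero.2 (Finsupp.mem_support_iff.1 hi)
  have e : d = Finsupp.single i 1 + (d - Finsupp.single i 1) := (add_tsub_cancel_of_le hi').symm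
  have e2 : monomial d (coeff d f) = X i * monomial (d - Finsupp.single i 1) (coeff d f) := by
    rw [X, monomial_mul, one_mul, ← e]
  rw [e2]
  refine Ideal.mul_mem_left _ _ (h _ (isHomogeneous_monomial _ ?_))
  have h3 := congrArg Finsupp.degree e
  rw [map_add, Finsupp.degree_single, hdeg] at h3
  omega

theorem quot_zero_iff (N : Ideal (PS K r)) (n : ℕ) :
    Module.finrank K (quotComponent K r N n) = 0 ↔ ∀ f : PS K r, f.IsHomogeneous n → f ∈ N := by
  rw [Submodule.finrank_eq_zero, Submodule.eq_bot_iff]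
  constructor
  · intro h f hf
    rw [← Ideal.Quotient.eq_zero_iff_mem]
    exact h _ ((mem_quotComponent _ _ _).2 ⟨f, hf, rfl⟩)
  · intro h x hx
    obtain ⟨f, hf, rfl⟩ := (mem_quotComponent _ _ _).1 hx
    exact Ideal.Quotient.eq_zero_iff_mem.2 (h f hf)

theorem hvec_aux (c : ℕ → ℕ) (D : ℕ) (h0 : c 0 = 1) (h1 : c 1 = 3)
    (hstep : ∀ n, c n = 0 → c (n + 1) = 0)
    (hsum : ∀ M, D < M → ∑ n ∈ Finset.range M, c n = 5) :
    c 2 = 1 ∧ ∀ n, 3 ≤ n → c n = 0 := by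
  have hz : ∀ k, c k = 0 → ∀ n, k ≤ n → c n = 0 := by
    intro k hk n hn
    induction n, hn using Nat.le_induction with
    | base => exact hk
    | succ n _ ih => exact hstep _ ih
  have h3 : ∑ n ∈ Finset.range (D + 1), c (3 + n) + c 2 = 1 := by
    have := hsum (3 + (D + 1)) (by omega)
    rw [Finset.sum_range_add, Finset.sum_range_succ, Finset.sum_range_succ,
      Finset.sum_range_succ] at this
    simp only [Finset.sum_range_zero, h0, h1] at this
    omega
  have h2 : c 2 ≠ 0 := by
    intro h2
    rw [h2, Finset.sum_eq_zero] at h3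
    · omega
    · intro n _
      exact hz 2 h2 _ (by omega)
  have h5 : c 2 = 1 := by omega
  refine ⟨h5, fun n hn => ?_⟩
  have h7 : ∑ n ∈ Finset.range (D + 1), c (3 + n) = 0 := by omega
  exact hz 3 ((Finset.sum_eq_zero_iff.1 h7) 0 (by simp)) n hn

theorem hvec {N : Ideal (PS K r)} {h : Polynomial ℤ}
    (hN : hilbSeries K r N = PowerSeries.mk (fun n => h.coeff n)) (h5 : h.eval 1 = 5)
    (h0 : Module.finrank K (quotComponent K r N 0) = 1)
    (h1 : Module.finrank K (quotComponent K r N 1) = 3) :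
    Module.finrank K (quotComponent K r N 2) = 1 ∧
      ∀ n, 3 ≤ n → Module.finrank K (quotComponent K r N n) = 0 := by
  have hc : ∀ n, h.coeff n = (Module.finrank K (quotComponent K r N n) : ℤ) := by
    intro n
    have := congrArg (PowerSeries.coeff n) hN
    simpa [hilbSeries] using this.symm
  have hsum : ∀ M, h.natDegree < M →
      ∑ n ∈ Finset.range M, Module.finrank K (quotComponent K r N n) = 5 := by
    intro M hM
    have := Polynomial.eval_eq_sum_range' hM (1 : ℤ)
    rw [h5] at this
    simp only [one_pow, mul_one, hc] at this
    exact_mod_cast this.symm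
  have hstep : ∀ n, Module.finrank K (quotComponent K r N n) = 0 →
      Module.finrank K (quotComponent K r N (n + 1)) = 0 := by
    intro n hn
    rw [quot_zero_iff] at hn ⊢
    exact gr_succ_le hn
  exact hvec_aux _ _ h0 h1 hstep hsum

theorem coeff_aux (m : ℕ) (F : PowerSeries ℤ) :
    PowerSeries.coeff 0 (F * (1 - PowerSeries.X) ^ m) = PowerSeries.coeff 0 F ∧
    PowerSeries.coeff 1 (F * (1 - PowerSeries.X) ^ m) =
      PowerSeries.coeff 1 F - m * PowerSeries.coeff 0 F := by
  induction m with
  | zero => simp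
  | succ m ih =>
    obtain ⟨ih0, ih1⟩ := ih
    rw [pow_succ, ← mul_assoc, mul_sub, mul_one, map_sub, map_sub]
    rw [PowerSeries.coeff_zero_mul_X, ih0, ih1, PowerSeries.coeff_succ_mul_X, ih0]
    refine ⟨by ring, by push_cast; ring⟩

theorem hom_zero_mem (I : Ideal (PS K r)) (h : I ≠ ⊤) (x : PS K r) (hx : x.IsHomogeneous 0)
    (hx2 : x ∈ I) : x = 0 := by
  rw [← totalDegree_zero_iff_isHomogeneous, totalDegree_eq_zero_iff_eq_C] at hx
  by_contra hne
  apply h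
  refine Ideal.eq_top_of_isUnit_mem _ hx2 ?_
  rw [hx]
  refine (IsUnit.mk0 _ ?_).map C
  intro h0
  rw [h0, C_0] at hx
  exact hne hx

theorem quot_zero_eq (I : Ideal (PS K r)) (h : I ≠ ⊤) :
    Module.finrank K (quotComponent K r I 0) = 1 := by
  have h1 := quot_add I 0
  have h2 : (gr K r 0 ⊓ I.restrictScalars K : Submodule K (PS K r)) = ⊥ := by
    rw [eq_bot_iff]
    rintro x ⟨hx, hx2⟩
    exact hom_zero_mem I h x hx hx2
  rw [h2, finrank_gr] at h1
  simpa using h1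

theorem quot_one_eq (I : Ideal (PS K r)) (h : Nondeg K r I) :
    Module.finrank K (quotComponent K r I 1) = r + 1 := by
  have h1 := quot_add I 1
  have h2 : (gr K r 1 ⊓ I.restrictScalars K : Submodule K (PS K r)) = ⊥ := by
    rw [eq_bot_iff]
    rintro x ⟨hx, hx2⟩
    exact h x hx2 hx
  rw [h2, finrank_gr] at h1
  simpa using h1

theorem setup [IsAlgClosed K]
    (I : Ideal (PS K r)) (hprime : I.IsPrime)
    (hhom : AMD.IsHomIdeal K r I) (hnd : AMD.Nondeg K r I)
    (d : ℕ) (hdim : AMD.DimEq K r I d) (hcodim : d + 3 = r)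
    (hdeg : AMD.DegreeEq K r I d 5)
    (hACM : AMD.IsACM K r I) :
    ∃ ls : List (PS K r), ls.length = d + 1 ∧ (∀ l ∈ ls, l.IsHomogeneous 1) ∧ RegOn I ls ∧
      IsHomIdeal K r (I ⊔ Ideal.span {x | x ∈ ls}) ∧
      Module.finrank K (quotComponent K r (I ⊔ Ideal.span {x | x ∈ ls}) 0) = 1 ∧
      Module.finrank K (quotComponent K r (I ⊔ Ideal.span {x | x ∈ ls}) 1) = 3 ∧
      Module.finrank K (quotComponent K r (I ⊔ Ideal.span {x | x ∈ ls}) 2) = 1 ∧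
      (∀ n, 3 ≤ n → Module.finrank K (quotComponent K r (I ⊔ Ideal.span {x | x ∈ ls}) n) = 0) ∧
      hilbSeries K r I * (1 - PowerSeries.X) ^ (d + 1) =
        1 + 3 * PowerSeries.X + PowerSeries.X ^ 2 := by
  obtain ⟨t, ht, hdep⟩ := hACM
  have htd : t = d + 1 := by
    unfold DimEq at hdim
    rw [hdim] at ht
    exact_mod_cast ht.symm
  subst htd
  have : Infinite K := IsAlgClosed.instInfinite
  obtain ⟨ls, hlen, hlin, hreg⟩ := exists_linear_regular I _ hdep
  obtain ⟨hN, hH⟩ := hilb_list ls I hhom hlin hreg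
  rw [hlen] at hH
  obtain ⟨h, hh, h5⟩ := hdeg
  have h0 := (coeff_aux (d + 1) (hilbSeries K r I)).1
  have h1 := (coeff_aux (d + 1) (hilbSeries K r I)).2
  rw [← hH] at h0 h1
  simp only [hilbSeries, PowerSeries.coeff_mk] at h0 h1
  rw [quot_zero_eq I hprime.ne_top, quot_one_eq I hnd] at h1
  rw [quot_zero_eq I hprime.ne_top] at h0
  have h0' : Module.finrank K (quotComponent K r (I ⊔ Ideal.span {x | x ∈ ls}) 0) = 1 := by
    exact_mod_cast h0
  have h1' : Module.finrank K (quotComponent K r (I ⊔ Ideal.span {x | x ∈ ls}) 1) = 3 := by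
    subst hcodim
    push_cast at h1
    omega
  rw [hh] at hH
  obtain ⟨h2, h3⟩ := hvec hH (by simpa using h5) h0' h1'
  refine ⟨ls, hlen, hlin, hreg, hN, h0', h1', h2, h3, ?_⟩
  rw [hh, ← hH]
  ext n
  have e3 : (3 : PowerSeries ℤ) * PowerSeries.X =
      PowerSeries.X + PowerSeries.X + PowerSeries.X := by ring
  rw [e3]
  rcases n with _ | _ | _ | n
  · simp [hilbSeries, h0', PowerSeries.coeff_X_pow]
  · simp [hilbSeries, h1', PowerSeries.coeff_X_pow, PowerSeries.coeff_one]
  · simp [hilbSeries, h2, PowerSeries.coeff_X_pow, PowerSeries.coeff_one, PowerSeries.coeff_X]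
  · simp [hilbSeries, h3 (n + 1 + 1 + 1) (by omega), PowerSeries.coeff_X_pow,
      PowerSeries.coeff_one, PowerSeries.coeff_X]

end AMD

namespace AMD
variable {K : Type} [Field K] {r : ℕ}

/-- the Artinian reduction ideal -/
abbrev NN (I : Ideal (PS K r)) (ls : List (PS K r)) : Ideal (PS K r) :=
  I ⊔ Ideal.span {x | x ∈ ls}

theorem exists_e {N : Ideal (PS K r)} (h : Module.finrank K (quotComponent K r N 1) = 3) :
    ∃ e : Fin 3 → PS K r, (∀ i, (e i).IsHomogeneous 1) ∧
      (∀ f : PS K r, f.IsHomogeneous 1 → ∃ κ : Fin 3 → K, f - ∑ i, C (κ i) * e i ∈ N) ∧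
      (∀ κ : Fin 3 → K, ∑ i, C (κ i) * e i ∈ N → κ = 0) := by
  let B := Module.finBasisOfFinrankEq K (quotComponent K r N 1) h
  have hB : ∀ i, ∃ f : PS K r, f.IsHomogeneous 1 ∧ Ideal.Quotient.mk N f = (B i : PS K r ⧸ N) :=
    fun i => (mem_quotComponent _ _ _).1 (B i).2
  choose e he hee using hB
  have hsum : ∀ κ : Fin 3 → K, Ideal.Quotient.mk N (∑ i, C (κ i) * e i) =
      ((∑ i, κ i • B i : quotComponent K r N 1) : PS K r ⧸ N) := by
    intro κ
    rw [map_sum, AddSubmonoidClass.coe_finsetSum]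
    refine Finset.sum_congr rfl fun i _ => ?_
    rw [Submodule.coe_smul, ← hee, ← smul_eq_C_mul]
    rfl
  refine ⟨e, he, ?_, ?_⟩
  · intro f hf
    let x : quotComponent K r N 1 := ⟨Ideal.Quotient.mk N f, (mem_quotComponent _ _ _).2 ⟨f, hf, rfl⟩⟩
    refine ⟨B.repr x, ?_⟩
    rw [← Ideal.Quotient.eq_zero_iff_mem, map_sub, hsum, B.sum_repr, sub_self]
  · intro κ hκ
    rw [← Ideal.Quotient.eq_zero_iff_mem, hsum, ZeroMemClass.coe_eq_zero] at hκ
    funext i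
    exact Fintype.linearIndependent_iff.1 B.linearIndependent κ hκ i

theorem exists_lam {N : Ideal (PS K r)} (h : Module.finrank K (quotComponent K r N 2) = 1) :
    ∃ lam : PS K r →ₗ[K] K, (∀ f : PS K r, f.IsHomogeneous 2 → (lam f = 0 ↔ f ∈ N)) ∧
      ∃ w : PS K r, w.IsHomogeneous 2 ∧ lam w = 1 := by
  have e : quotComponent K r N 2 ≃ₗ[K] K := LinearEquiv.ofFinrankEq _ _ (by rw [h]; simp)
  let g : PS K r →ₗ[K] quotComponent K r N 2 :=
    LinearMap.codRestrict _ ((Ideal.Quotient.mkₐ K N).toLinearMap ∘ₗ homogeneousComponent 2)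
      (fun f => (mem_quotComponent _ _ _).2 ⟨_, homogeneousComponent_isHomogeneous 2 f, rfl⟩)
  have hg : ∀ f : PS K r, f.IsHomogeneous 2 → (g f : PS K r ⧸ N) = Ideal.Quotient.mk N f := by
    intro f hf
    change Ideal.Quotient.mk N (homogeneousComponent 2 f) = _
    rw [homogeneousComponent_eq_self hf]
  refine ⟨e.toLinearMap ∘ₗ g, ?_, ?_⟩
  · intro f hf
    rw [LinearMap.comp_apply, LinearEquiv.coe_coe, LinearEquiv.map_eq_zero_iff,
      ← ZeroMemClass.coe_eq_zero, hg f hf, Ideal.Quotient.eq_zero_iff_mem]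
  · obtain ⟨w, hw, hw2⟩ := (mem_quotComponent _ _ _).1 (e.symm 1).2
    refine ⟨w, hw, ?_⟩
    rw [LinearMap.comp_apply, LinearEquiv.coe_coe]
    have : g w = e.symm 1 := by
      apply Subtype.ext
      rw [hg w hw, hw2]
    rw [this, LinearEquiv.apply_symm_apply]

/-- bundled data -/
structure Dat (I : Ideal (PS K r)) (ls : List (PS K r)) {T : Type} [CommRing T] [Algebra K T]
    (ι : T →ₐ[K] PS K r) : Prop where
  prime : I.IsPrime
  hom : IsHomIdeal K r I
  nd : Nondeg K r I
  lin : ∀ l ∈ ls, l.IsHomogeneous 1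
  homN : IsHomIdeal K r (NN I ls)
  neN : NN I ls ≠ ⊤
  ex : ∀ l ∈ ls, ∃ τ, ι τ = l
  top : ∀ n, 3 ≤ n → ∀ f : PS K r, f.IsHomogeneous n → f ∈ NN I ls
  free : ∀ b : Fin 5 → PS K r, (∀ p : Fin 5 → K, ∑ i, algebraMap K (PS K r) (p i) * b i ∈ NN I ls →
    ∀ i, p i = 0) → ∀ p : Fin 5 → T, ∑ i, ι (p i) * b i ∈ I → ∀ i, p i = 0

section
variable {I : Ideal (PS K r)} {ls : List (PS K r)} {T : Type} [CommRing T] [Algebra K T]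
  {ι : T →ₐ[K] PS K r}

theorem T_one (hlin : ∀ l ∈ ls, l.IsHomogeneous 1) (hex : ∀ l ∈ ls, ∃ τ, ι τ = l)
    (hnd : Nondeg K r I) (hhom : IsHomIdeal K r I)
    (f : PS K r) (hf : f.IsHomogeneous 1) (hN : f ∈ NN I ls) : ∃ τ, ι τ = f := by
  obtain ⟨i, hi, s, hs, rfl⟩ := Submodule.mem_sup.1 hN
  have h1 : homogeneousComponent 1 i = 0 :=
    hnd _ (hhom i hi 1) (homogeneousComponent_isHomogeneous _ _)
  rw [← homogeneousComponent_eq_self hf, map_add, h1, zero_add]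
  refine Submodule.closure_induction (p := fun s _ => ∃ τ, ι τ = homogeneousComponent 1 s)
    ?_ ?_ ?_ hs
  · exact ⟨0, by simp⟩
  · rintro x y - - ⟨a, ha⟩ ⟨b, hb⟩
    exact ⟨a + b, by rw [map_add, map_add, ha, hb]⟩
  · intro g l hl
    obtain ⟨τ, hτ⟩ := hex l hl
    refine ⟨algebraMap K T (coeff 0 g) * τ, ?_⟩
    rw [smul_eq_mul, comp_mul (hlin l hl) g 0, homogeneousComponent_zero, map_mul, hτ,
      AlgHom.commutes]
    rfl

theorem span_lemma {J : Ideal (PS K r)} (hJ : IsHomIdeal K r J)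
    (hlin : ∀ l ∈ ls, l.IsHomogeneous 1) (hex : ∀ l ∈ ls, ∃ τ, ι τ = l)
    {m : ℕ} (b : Fin m → PS K r) (dg : Fin m → ℕ) (hb : ∀ i, (b i).IsHomogeneous (dg i))
    (h : ∀ f : PS K r, ∃ κ : Fin m → K, f - ∑ i, C (κ i) * b i ∈ NN J ls) (f : PS K r) :
    ∃ p : Fin m → T, f - ∑ i, ι (p i) * b i ∈ J := by
  let P : Submodule K (PS K r) :=
    { carrier := {f | ∃ p : Fin m → T, f - ∑ i, ι (p i) * b i ∈ J}
      add_mem' := by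
        rintro x y ⟨p, hp⟩ ⟨q, hq⟩
        refine ⟨p + q, ?_⟩
        convert add_mem hp hq using 1
        simp only [Pi.add_apply, map_add, add_mul, Finset.sum_add_distrib]
        ring
      zero_mem' := ⟨0, by simp⟩
      smul_mem' := by
        rintro c x ⟨p, hp⟩
        refine ⟨c • p, ?_⟩
        convert J.mul_mem_left (C c) hp using 1
        simp only [Pi.smul_apply, map_smul, smul_eq_C_mul, mul_sub, Finset.mul_sum, mul_assoc] }
  have hmul : ∀ τ : T, ∀ x ∈ P, x * ι τ ∈ P := by
    rintro τ x ⟨p, hp⟩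
    refine ⟨fun i => p i * τ, ?_⟩
    convert J.mul_mem_left (ι τ) hp using 1
    simp only [map_mul, mul_sub, Finset.mul_sum]
    congr 1
    · ring
    · exact Finset.sum_congr rfl fun i _ => by ring
  have hJP : ∀ x ∈ J, x ∈ P := fun x hx => ⟨0, by simpa using hx⟩
  have hbP : ∀ i, b i ∈ P := by
    intro i
    refine ⟨Pi.single i 1, ?_⟩
    rw [Finset.sum_eq_single i]
    · simp
    · intro j _ hj; simp [hj]
    · simp
  have hl : ∀ n, (∀ m < n, ∀ f : PS K r, homogeneousComponent m f ∈ P) →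
      ∀ f ∈ NN J ls, homogeneousComponent n f ∈ P := by
    intro n ih f hf
    obtain ⟨j, hj, s, hs, rfl⟩ := Submodule.mem_sup.1 hf
    rw [map_add]
    refine add_mem (hJP _ (hJ j hj n)) ?_
    refine Submodule.closure_induction (p := fun s _ => homogeneousComponent n s ∈ P) ?_ ?_ ?_ hs
    · simp
    · intro x y _ _ hx hy
      rw [map_add]; exact add_mem hx hy
    · intro g l hl
      rw [smul_eq_mul]
      rcases n with _ | n
      · rw [comp_mul_lt (hlin l hl) g 0 one_pos]; exact zero_mem _
      · obtain ⟨τ, hτ⟩ := hex l hl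
        rw [comp_mul (hlin l hl), ← hτ]
        exact hmul _ _ (ih n (by omega) g)
  have key : ∀ n, ∀ f : PS K r, homogeneousComponent n f ∈ P := by
    intro n
    induction n using Nat.strong_induction_on with
    | _ n ih =>
      intro f
      obtain ⟨κ, hκ⟩ := h f
      have h1 := hl n ih _ hκ
      rw [map_sub, map_sum] at h1
      have h2 : ∑ i, homogeneousComponent n (C (κ i) * b i) ∈ P := by
        refine Submodule.sum_mem _ fun i _ => ?_
        rw [homogeneousComponent_C_mul, ← smul_eq_C_mul, homogeneousComponent_of_mem (hb i)]
        refine Submodule.smul_mem _ _ ?_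
        split_ifs
        · exact hbP i
        · exact zero_mem _
      simpa using add_mem h1 h2
  change f ∈ P
  rw [← sum_homogeneousComponent f]
  exact Submodule.sum_mem _ fun i _ => key i f

theorem deg_two_rep (D : Dat I ls ι) {e : Fin 3 → PS K r} (he : ∀ i, (e i).IsHomogeneous 1)
    (hsp : ∀ f : PS K r, f.IsHomogeneous 1 → ∃ κ : Fin 3 → K, f - ∑ i, C (κ i) * e i ∈ NN I ls)
    (f : PS K r) (hf : f.IsHomogeneous 2) (hN : f ∈ NN I ls) :
    ∃ (a : Fin 3 → T) (b : T), ((∀ k, (ι (a k)).IsHomogeneous 1) ∧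
      (∀ k, ι (a k) ∈ Ideal.span {x | x ∈ ls}) ∧ ι b ∈ Ideal.span {x | x ∈ ls}) ∧
      f - (∑ k, ι (a k) * e k + ι b) ∈ I := by
  obtain ⟨i, hi, s, hs, rfl⟩ := Submodule.mem_sup.1 hN
  rw [← homogeneousComponent_eq_self hf, map_add]
  suffices h : ∃ (a : Fin 3 → T) (b : T), ((∀ k, (ι (a k)).IsHomogeneous 1) ∧
      (∀ k, ι (a k) ∈ Ideal.span {x | x ∈ ls}) ∧ ι b ∈ Ideal.span {x | x ∈ ls}) ∧
      homogeneousComponent 2 s = ∑ k, ι (a k) * e k + ι b by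
    obtain ⟨a, b, h1, h2⟩ := h
    refine ⟨a, b, h1, ?_⟩
    rw [h2, add_sub_cancel_right]
    exact D.hom i hi 2
  refine Submodule.closure_induction (p := fun s _ => ∃ (a : Fin 3 → T) (b : T),
      ((∀ k, (ι (a k)).IsHomogeneous 1) ∧
      (∀ k, ι (a k) ∈ Ideal.span {x | x ∈ ls}) ∧ ι b ∈ Ideal.span {x | x ∈ ls}) ∧
      homogeneousComponent 2 s = ∑ k, ι (a k) * e k + ι b) ?_ ?_ ?_ hs
  · exact ⟨0, 0, ⟨fun k => by simpa using isHomogeneous_zero _ _ _, by simp, by simp⟩, by simp⟩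
  · rintro x y - - ⟨a, b, ⟨h1, h3, h4⟩, h2⟩ ⟨a', b', ⟨h1', h3', h4'⟩, h2'⟩
    refine ⟨a + a', b + b', ⟨fun k => ?_, fun k => ?_, ?_⟩, ?_⟩
    · rw [Pi.add_apply, map_add]; exact (h1 k).add (h1' k)
    · rw [Pi.add_apply, map_add]; exact add_mem (h3 k) (h3' k)
    · rw [map_add]; exact add_mem h4 h4'
    · rw [map_add, h2, h2']
      simp only [Pi.add_apply, map_add, add_mul, Finset.sum_add_distrib]
      ring
  · intro g l hl
    obtain ⟨τ, hτ⟩ := D.ex l hl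
    rw [smul_eq_mul, comp_mul (D.lin l hl) g 1]
    have hg := homogeneousComponent_isHomogeneous 1 g
    obtain ⟨κ, hκ⟩ := hsp _ hg
    obtain ⟨σ, hσ⟩ := T_one D.lin D.ex D.nd D.hom _ (by
      refine hg.sub (IsHomogeneous.sum _ _ _ fun i _ => ?_)
      simpa using (isHomogeneous_C _ (κ i)).mul (he i)) hκ
    refine ⟨fun k => algebraMap K T (κ k) * τ, σ * τ, ⟨fun k => ?_, fun k => ?_, ?_⟩, ?_⟩
    · rw [map_mul, hτ, AlgHom.commutes]
      simpa using (isHomogeneous_C _ (κ k)).mul (D.lin l hl)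
    · rw [map_mul, hτ]; exact Ideal.mul_mem_left _ _ (Ideal.subset_span hl)
    · rw [map_mul, hτ]; exact Ideal.mul_mem_left _ _ (Ideal.subset_span hl)
    · rw [map_mul, hτ, hσ, sub_mul, Finset.sum_mul]
      simp only [map_mul, hτ, AlgHom.commutes, algebraMap_eq]
      have : ∑ k, C (κ k) * e k * l = ∑ k, C (κ k) * l * e k :=
        Finset.sum_congr rfl fun k _ => by ring
      rw [this]
      ring

/-- a standard basis for the Artinian reduction -/
def bas (e : Fin 3 → PS K r) (w : PS K r) : Fin 5 → PS K r := ![1, e 0, e 1, e 2, w]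

theorem bas_sum {R : Type} [CommRing R] (g : R → PS K r) (e : Fin 3 → PS K r) (w : PS K r)
    (p : Fin 5 → R) : ∑ i, g (p i) * bas e w i =
      g (p 0) + (∑ i : Fin 3, g (p i.succ.castSucc) * e i) + g (p 4) * w := by
  simp [Fin.sum_univ_succ, bas]
  ring_nf

theorem bas_free (D : Dat I ls ι) {e : Fin 3 → PS K r} (he : ∀ i, (e i).IsHomogeneous 1)
    (hind : ∀ κ : Fin 3 → K, ∑ i, C (κ i) * e i ∈ NN I ls → κ = 0)
    {w : PS K r} (hw : w.IsHomogeneous 2) (hwN : w ∉ NN I ls) (p : Fin 5 → T)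
    (hp : ∑ i, ι (p i) * bas e w i ∈ I) : ∀ i, p i = 0 := by
  refine D.free (bas e w) ?_ p hp
  intro p hp
  rw [bas_sum, algebraMap_eq] at hp
  have hs : (∑ i : Fin 3, C (p i.succ.castSucc) * e i).IsHomogeneous 1 :=
    IsHomogeneous.sum _ _ _ fun i _ => by simpa using (isHomogeneous_C _ _).mul (he i)
  have hw' : (C (p 4) * w).IsHomogeneous 2 := by simpa using (isHomogeneous_C _ _).mul hw
  have h0' := isHomogeneous_C (Fin (r + 1)) (p 0)
  have h0 := D.homN _ hp 0
  have h1 := D.homN _ hp 1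
  have h2 := D.homN _ hp 2
  simp only [map_add, homogeneousComponent_of_mem hs, homogeneousComponent_of_mem hw',
    homogeneousComponent_of_mem h0'] at h0 h1 h2
  norm_num at h0 h1 h2
  have e0 : p 0 = 0 := by
    have := hom_zero_mem _ D.neN _ h0' h0
    simpa using this
  have e1 := hind _ h1
  have e4 : p 4 = 0 := by
    by_contra hne
    apply hwN
    have := Ideal.mul_mem_left _ (C (p 4)⁻¹) h2
    rwa [← mul_assoc, ← C_mul, inv_mul_cancel₀ hne, C_1, one_mul] at this
  intro i
  fin_cases i
  · exact e0
  · exact congrFun e1 0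
  · exact congrFun e1 1
  · exact congrFun e1 2
  · exact e4

end
end AMD

namespace AMD
variable {K : Type} [Field K] {r : ℕ}
variable {I : Ideal (PS K r)} {ls : List (PS K r)} {T : Type} [CommRing T] [Algebra K T]
  {ι : T →ₐ[K] PS K r}

theorem mem_W {m : ℕ} (N : Ideal (PS K r)) (b : Fin m → PS K r) (f : PS K r) :
    f ∈ N.restrictScalars K ⊔ Submodule.span K (Set.range b) ↔
      ∃ κ : Fin m → K, f - ∑ i, C (κ i) * b i ∈ N := by
  rw [Submodule.mem_sup]
  constructor
  · rintro ⟨y, hy, z, hz, rfl⟩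
    obtain ⟨κ, rfl⟩ := (Submodule.mem_span_range_iff_exists_fun K).1 hz
    refine ⟨κ, ?_⟩
    simp only [← smul_eq_C_mul, add_sub_cancel_right]
    exact hy
  · rintro ⟨κ, h⟩
    refine ⟨_, h, ∑ i, C (κ i) * b i, ?_, by ring⟩
    refine Submodule.sum_mem _ fun i _ => ?_
    rw [← smul_eq_C_mul]
    exact Submodule.smul_mem _ _ (Submodule.subset_span ⟨i, rfl⟩)

theorem bas_span (D : Dat I ls ι) {e : Fin 3 → PS K r}
    (hsp : ∀ f : PS K r, f.IsHomogeneous 1 → ∃ κ : Fin 3 → K, f - ∑ i, C (κ i) * e i ∈ NN I ls)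
    {w : PS K r} (hw : ∀ f : PS K r, f.IsHomogeneous 2 → ∃ c : K, f - C c * w ∈ NN I ls)
    (f : PS K r) : ∃ κ : Fin 5 → K, f - ∑ i, C (κ i) * bas e w i ∈ NN I ls := by
  rw [← mem_W, ← sum_homogeneousComponent f]
  refine Submodule.sum_mem _ fun n _ => ?_
  have hf := homogeneousComponent_isHomogeneous n f
  generalize homogeneousComponent n f = g at hf
  rw [mem_W]
  have hz : (0 : PS K r) ∈ NN I ls := zero_mem _
  rcases n with _ | _ | _ | n
  · rw [← totalDegree_zero_iff_isHomogeneous, totalDegree_eq_zero_iff_eq_C] at hf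
    refine ⟨![g.coeff 0, 0, 0, 0, 0], ?_⟩
    rw [bas_sum (fun x => C x)]
    simp [Fin.sum_univ_succ, ← hf]
  · obtain ⟨κ, hκ⟩ := hsp g hf
    refine ⟨![0, κ 0, κ 1, κ 2, 0], ?_⟩
    rw [bas_sum (fun x => C x)]
    convert hκ using 2
    simp [Fin.sum_univ_succ]
  · obtain ⟨c, hc⟩ := hw g hf
    refine ⟨![0, 0, 0, 0, c], ?_⟩
    rw [bas_sum (fun x => C x)]
    simpa [Fin.sum_univ_succ] using hc
  · refine ⟨0, ?_⟩
    simpa using D.top (n + 1 + 1 + 1) (by omega) g hf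

theorem nondeg [IsDomain T] (D : Dat I ls ι) {e : Fin 3 → PS K r} (he : ∀ i, (e i).IsHomogeneous 1)
    (hsp : ∀ f : PS K r, f.IsHomogeneous 1 → ∃ κ : Fin 3 → K, f - ∑ i, C (κ i) * e i ∈ NN I ls)
    (hind : ∀ κ : Fin 3 → K, ∑ i, C (κ i) * e i ∈ NN I ls → κ = 0)
    {w : PS K r} (hw2 : w.IsHomogeneous 2) (hwN : w ∉ NN I ls)
    (hw : ∀ f : PS K r, f.IsHomogeneous 2 → ∃ c : K, f - C c * w ∈ NN I ls)
    (y : PS K r) (hy : y.IsHomogeneous 1)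
    (hyz : ∀ z : PS K r, z.IsHomogeneous 1 → y * z ∈ NN I ls) : y ∈ NN I ls := by
  by_contra hyN
  -- representation of y
  obtain ⟨κ, hκ⟩ := hsp y hy
  have hκ1 : (y - ∑ i, C (κ i) * e i).IsHomogeneous 1 := by
    refine hy.sub (IsHomogeneous.sum _ _ _ fun i _ => ?_)
    simpa using (isHomogeneous_C _ (κ i)).mul (he i)
  obtain ⟨σ, hσ⟩ := T_one D.lin D.ex D.nd D.hom _ hκ1 hκ
  have hκ0 : κ ≠ 0 := by
    rintro rfl
    apply hyN
    simpa using hκ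
  -- representation of y * e j
  have h2 : ∀ j : Fin 3, ∃ (a : Fin 3 → T) (b : T), ((∀ k, (ι (a k)).IsHomogeneous 1) ∧
      (∀ k, ι (a k) ∈ Ideal.span {x | x ∈ ls}) ∧ ι b ∈ Ideal.span {x | x ∈ ls}) ∧
      y * e j - (∑ k, ι (a k) * e k + ι b) ∈ I := fun j =>
    deg_two_rep D he hsp _ (hy.mul (he j)) (hyz _ (he j))
  choose a b _ hab using h2
  -- representation of y * w
  have hdeg : ∀ i : Fin 5, (bas e w i).IsHomogeneous ((![0, 1, 1, 1, 2] : Fin 5 → ℕ) i) := by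
    intro i
    fin_cases i
    · exact isHomogeneous_one _ _
    · exact he 0
    · exact he 1
    · exact he 2
    · exact hw2
  obtain ⟨p, hp⟩ := span_lemma D.hom D.lin D.ex (bas e w) _ hdeg (bas_span D hsp hw) (y * w)
  set c := p 4 with hc
  let M : Matrix (Fin 5) (Fin 5) T :=
    ![![σ - c, algebraMap K T (κ 0), algebraMap K T (κ 1), algebraMap K T (κ 2), 0],
      ![b 0, a 0 0 - c, a 0 1, a 0 2, 0],
      ![b 1, a 1 0, a 1 1 - c, a 1 2, 0],
      ![b 2, a 2 0, a 2 1, a 2 2 - c, 0],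
      ![p 0, p 1, p 2, p 3, 0]]
  have hM : ∀ j, (y - ι c) * bas e w j - ∑ k, ι (M j k) * bas e w k ∈ I := by
    intro j
    rw [bas_sum]
    fin_cases j
    · convert I.zero_mem using 1
      simp [M, bas, Fin.sum_univ_succ, hσ]
      ring
    · convert hab 0 using 1
      simp [M, bas, Fin.sum_univ_succ]
      ring
    · convert hab 1 using 1
      simp [M, bas, Fin.sum_univ_succ]
      ring
    · convert hab 2 using 1
      simp [M, bas, Fin.sum_univ_succ]
      ring
    · convert hp using 1
      rw [bas_sum]
      simp [M, bas, Fin.sum_univ_succ, hc]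
      ring
  have hdet : M.det = 0 := by
    apply Matrix.det_eq_zero_of_column_eq_zero 4
    intro i
    fin_cases i <;> rfl
  obtain ⟨v, hv, hvM⟩ := Matrix.exists_vecMul_eq_zero_iff.2 hdet
  have h3 : (y - ι c) * ∑ j, ι (v j) * bas e w j ∈ I := by
    have h4 : ∑ j, ι (v j) * ((y - ι c) * bas e w j - ∑ k, ι (M j k) * bas e w k) ∈ I :=
      Ideal.sum_mem _ fun j _ => Ideal.mul_mem_left _ _ (hM j)
    have h5 : ∑ j, ι (v j) * ∑ k, ι (M j k) * bas e w k = 0 := by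
      simp only [Finset.mul_sum]
      rw [Finset.sum_comm]
      refine Finset.sum_eq_zero fun k _ => ?_
      have := congrArg ι (congrFun hvM k)
      simp only [Matrix.vecMul, dotProduct, map_sum, map_mul, Pi.zero_apply, map_zero] at this
      rw [← zero_mul (bas e w k), ← this, Finset.sum_mul]
      exact Finset.sum_congr rfl fun j _ => by ring
    simp only [mul_sub, Finset.sum_sub_distrib] at h4
    rw [h5, sub_zero] at h4
    convert h4 using 1
    rw [Finset.mul_sum]
    exact Finset.sum_congr rfl fun j _ => by ring
  rcases D.prime.mem_or_mem h3 with h6 | h6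
  · apply hκ0
    have h7 := bas_free D he hind hw2 hwN
      ![σ - c, algebraMap K T (κ 0), algebraMap K T (κ 1), algebraMap K T (κ 2), 0] (by
        rw [bas_sum]
        convert h6 using 1
        simp [Fin.sum_univ_succ, hσ]
        ring)
    have hinj : Function.Injective (algebraMap K T) := (algebraMap K T).injective
    funext i
    fin_cases i
    · exact hinj (by simpa using h7 1)
    · exact hinj (by simpa using h7 2)
    · exact hinj (by simpa using h7 3)
  · exact hv (funext (bas_free D he hind hw2 hwN v h6))
end AMD

namespace AMD
variable {K : Type} [Field K] {r : ℕ}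

theorem indep_span {N : Ideal (PS K r)} (h : Module.finrank K (quotComponent K r N 1) = 3)
    {e : Fin 3 → PS K r} (he : ∀ i, (e i).IsHomogeneous 1)
    (hind : ∀ κ : Fin 3 → K, ∑ i, C (κ i) * e i ∈ N → κ = 0)
    (f : PS K r) (hf : f.IsHomogeneous 1) : ∃ κ : Fin 3 → K, f - ∑ i, C (κ i) * e i ∈ N := by
  let v : Fin 3 → quotComponent K r N 1 :=
    fun i => ⟨Ideal.Quotient.mk N (e i), (mem_quotComponent _ _ _).2 ⟨e i, he i, rfl⟩⟩
  have hsum : ∀ κ : Fin 3 → K, Ideal.Quotient.mk N (∑ i, C (κ i) * e i) =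
      ((∑ i, κ i • v i : quotComponent K r N 1) : PS K r ⧸ N) := by
    intro κ
    rw [map_sum, AddSubmonoidClass.coe_finsetSum]
    refine Finset.sum_congr rfl fun i _ => ?_
    rw [Submodule.coe_smul, ← smul_eq_C_mul]
    rfl
  have hli : LinearIndependent K v := by
    rw [Fintype.linearIndependent_iff]
    intro κ hκ i
    have : ∑ i, C (κ i) * e i ∈ N := by
      rw [← Ideal.Quotient.eq_zero_iff_mem, hsum, hκ]; rfl
    exact congrFun (hind κ this) i
  have hs := hli.span_eq_top_of_card_eq_finrank (by simp [h])
  let x : quotComponent K r N 1 := ⟨Ideal.Quotient.mk N f, (mem_quotComponent _ _ _).2 ⟨f, hf, rfl⟩⟩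
  have hx : x ∈ Submodule.span K (Set.range v) := by rw [hs]; trivial
  obtain ⟨κ, hκ⟩ := (Submodule.mem_span_range_iff_exists_fun K).1 hx
  refine ⟨κ, ?_⟩
  rw [← Ideal.Quotient.eq_zero_iff_mem, map_sub, hsum, hκ, sub_self]

theorem hom_C_mul {f : PS K r} {n : ℕ} (h : f.IsHomogeneous n) (c : K) :
    (C c * f).IsHomogeneous n := by
  simpa using (isHomogeneous_C _ c).mul h

theorem normal_form [IsAlgClosed K] {N : Ideal (PS K r)}
    (h3 : Module.finrank K (quotComponent K r N 1) = 3)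
    {e : Fin 3 → PS K r} (he : ∀ i, (e i).IsHomogeneous 1)
    (hind : ∀ κ : Fin 3 → K, ∑ i, C (κ i) * e i ∈ N → κ = 0)
    (lam : PS K r →ₗ[K] K) (hlam : ∀ f : PS K r, f.IsHomogeneous 2 → (lam f = 0 ↔ f ∈ N))
    (hnon : ∀ y : PS K r, y.IsHomogeneous 1 →
      (∀ z : PS K r, z.IsHomogeneous 1 → y * z ∈ N) → y ∈ N) :
    ∃ (y : Fin 3 → PS K r) (c : K), (∀ i, (y i).IsHomogeneous 1) ∧
      (∀ κ : Fin 3 → K, ∑ i, C (κ i) * y i ∈ N → κ = 0) ∧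
      y 0 * y 0 ∈ N ∧ y 0 * y 1 ∈ N ∧ y 1 * y 2 ∈ N ∧ y 1 * y 1 - y 0 * y 2 ∈ N ∧
      y 2 * y 2 - C c * (y 0 * y 2) ∈ N ∧ lam (y 0 * y 2) = 1 := by
  have lC : ∀ (a : K) (f : PS K r), lam (C a * f) = a * lam f := by
    intro a f
    rw [← smul_eq_C_mul, map_smul, smul_eq_mul]
  -- isotropic vector
  have hy1 : ∃ y1 : PS K r, y1.IsHomogeneous 1 ∧ y1 ∉ N ∧ lam (y1 * y1) = 0 := by
    by_cases h00 : lam (e 0 * e 0) = 0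
    · refine ⟨e 0, he 0, ?_, h00⟩
      intro h
      have := hind ![1, 0, 0] (by simpa [Fin.sum_univ_succ] using h)
      simpa using congrFun this 0
    · obtain ⟨s, hs⟩ := IsAlgClosed.exists_root
        (Polynomial.C (lam (e 0 * e 0)) * Polynomial.X ^ 2 +
          Polynomial.C (2 * lam (e 0 * e 1)) * Polynomial.X +
          Polynomial.C (lam (e 1 * e 1))) (by
          rw [Polynomial.degree_quadratic h00]; decide)
      refine ⟨C s * e 0 + e 1, (hom_C_mul (he 0) s).add (he 1), ?_, ?_⟩
      · intro h
        have := hind ![s, 1, 0] (by simpa [Fin.sum_univ_succ] using h)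
        simpa using congrFun this 1
      · have e1 : (C s * e 0 + e 1) * (C s * e 0 + e 1) =
            C (s * s) * (e 0 * e 0) + C (2 * s) * (e 0 * e 1) + e 1 * e 1 := by
          simp only [map_mul, map_ofNat]; ring
        rw [e1, map_add, map_add, lC, lC]
        simp only [Polynomial.IsRoot, Polynomial.eval_add, Polynomial.eval_mul,
          Polynomial.eval_C, Polynomial.eval_pow, Polynomial.eval_X] at hs
        linear_combination hs
  obtain ⟨y1, hy1, hy1N, h11⟩ := hy1
  have hy3 : ∃ y3 : PS K r, y3.IsHomogeneous 1 ∧ lam (y1 * y3) = 1 := by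
    by_contra hcon
    apply hy1N
    refine hnon y1 hy1 fun z hz => ?_
    rw [← hlam _ (hy1.mul hz)]
    by_contra hne
    refine hcon ⟨C (lam (y1 * z))⁻¹ * z, hom_C_mul hz _, ?_⟩
    rw [mul_left_comm, lC, inv_mul_cancel₀ hne]
  obtain ⟨y3, hy3, h13⟩ := hy3
  -- orthogonal vector
  have hv : ∃ v : PS K r, v.IsHomogeneous 1 ∧ v ∉ N ∧ lam (v * y1) = 0 ∧ lam (v * y3) = 0 := by
    let M : Matrix (Fin 3) (Fin 3) K :=
      fun i j => (![lam (e i * y1), lam (e i * y3), 0] : Fin 3 → K) j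
    have hdet : M.det = 0 := Matrix.det_eq_zero_of_column_eq_zero 2 (fun i => rfl)
    obtain ⟨κ, hκ, hκM⟩ := Matrix.exists_vecMul_eq_zero_iff.2 hdet
    have hl : ∀ z, lam ((∑ i, C (κ i) * e i) * z) = ∑ i, κ i * lam (e i * z) := by
      intro z
      rw [Finset.sum_mul, map_sum]
      exact Finset.sum_congr rfl fun i _ => by rw [mul_assoc, lC]
    refine ⟨∑ i, C (κ i) * e i, IsHomogeneous.sum _ _ _ fun i _ => hom_C_mul (he i) _,
      fun h => hκ (hind κ h), ?_, ?_⟩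
    · rw [hl]
      exact congrFun hκM 0
    · rw [hl]
      exact congrFun hκM 1
  obtain ⟨v, hv, hvN, hv1, hv3⟩ := hv
  have l31 : lam (y3 * y1) = 1 := by rw [mul_comm, h13]
  -- independence
  have hindv : ∀ a : K, a ≠ 0 → ∀ κ : Fin 3 → K,
      ∑ i, C (κ i) * (![y1, C a * v, y3] : Fin 3 → PS K r) i ∈ N → κ = 0 := by
    intro a ha κ hκ
    have hs : ∑ i, C (κ i) * (![y1, C a * v, y3] : Fin 3 → PS K r) i =
      C (κ 0) * y1 + C (κ 1 * a) * v + C (κ 2) * y3 := by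
      simp [Fin.sum_univ_succ]; ring
    rw [hs] at hκ
    have hh : (C (κ 0) * y1 + C (κ 1 * a) * v + C (κ 2) * y3).IsHomogeneous 1 :=
      ((hom_C_mul hy1 _).add (hom_C_mul hv _)).add (hom_C_mul hy3 _)
    have q1 := (hlam _ (hh.mul hy1)).2 (Ideal.mul_mem_right _ _ hκ)
    have q3 := (hlam _ (hh.mul hy3)).2 (Ideal.mul_mem_right _ _ hκ)
    simp only [add_mul, mul_assoc, map_add, lC, h11, hv1, hv3, h13, l31] at q1 q3
    have k2 : κ 2 = 0 := by linear_combination q1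
    have k0 : κ 0 = 0 := by rw [k2] at q3; linear_combination q3
    rw [k0, k2] at hκ
    have k1 : κ 1 = 0 := by
      by_contra hne
      apply hvN
      have := Ideal.mul_mem_left _ (C (κ 1 * a)⁻¹) hκ
      simp only [map_zero, zero_mul, zero_add, add_zero] at this
      rwa [← mul_assoc, ← C_mul, inv_mul_cancel₀ (mul_ne_zero hne ha), C_1, one_mul] at this
    funext i
    fin_cases i
    · exact k0
    · exact k1
    · exact k2
  have hvv : lam (v * v) ≠ 0 := by
    intro hvv
    apply hvN
    refine hnon v hv fun z hz => ?_
    have hyh : ∀ i, ((![y1, C 1 * v, y3] : Fin 3 → PS K r) i).IsHomogeneous 1 := by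
      intro i
      fin_cases i
      · exact hy1
      · exact hom_C_mul hv 1
      · exact hy3
    obtain ⟨κ, hκ⟩ := indep_span h3 hyh (hindv 1 one_ne_zero) z hz
    have hh : (z - ∑ i, C (κ i) * (![y1, C 1 * v, y3] : Fin 3 → PS K r) i).IsHomogeneous 1 :=
      hz.sub (IsHomogeneous.sum _ _ _ fun i _ => hom_C_mul (hyh i) _)
    have q := (hlam _ (hv.mul hh)).2 (Ideal.mul_mem_left _ _ hκ)
    have e1 : v * (z - ∑ i, C (κ i) * (![y1, C 1 * v, y3] : Fin 3 → PS K r) i) =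
        v * z - (C (κ 0) * (v * y1) + C (κ 1) * (v * v) + C (κ 2) * (v * y3)) := by
      simp [Fin.sum_univ_succ]; ring
    rw [e1, map_sub, map_add, map_add, lC, lC, lC, hv1, hvv, hv3] at q
    rw [← hlam _ (hv.mul hz)]
    simpa using q
  obtain ⟨s, hs⟩ := IsAlgClosed.exists_pow_nat_eq (lam (v * v)) (n := 2) (by norm_num)
  have hs0 : s ≠ 0 := by
    rintro rfl
    apply hvv
    rw [← hs]; simp
  have hsi : s⁻¹ ≠ 0 := inv_ne_zero hs0
  have hyh : ∀ i, ((![y1, C s⁻¹ * v, y3] : Fin 3 → PS K r) i).IsHomogeneous 1 := by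
    intro i
    fin_cases i
    · exact hy1
    · exact hom_C_mul hv _
    · exact hy3
  have l22 : lam (C s⁻¹ * v * (C s⁻¹ * v)) = 1 := by
    rw [show C s⁻¹ * v * (C s⁻¹ * v) = C (s⁻¹ * s⁻¹) * (v * v) by rw [C_mul]; ring, lC, ← hs]
    field_simp
  refine ⟨![y1, C s⁻¹ * v, y3], lam (y3 * y3), hyh, hindv _ hsi, ?_, ?_, ?_, ?_, ?_, h13⟩
  · exact (hlam _ (hy1.mul hy1)).1 h11
  · refine (hlam _ (hy1.mul (hom_C_mul hv _))).1 ?_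
    rw [mul_left_comm, lC, mul_comm y1, hv1, mul_zero]
  · refine (hlam _ ((hom_C_mul hv _).mul hy3)).1 ?_
    rw [mul_assoc, lC, hv3, mul_zero]
  · refine (hlam _ (((hom_C_mul hv _).mul (hom_C_mul hv _)).sub (hy1.mul hy3))).1 ?_
    rw [map_sub, l22, h13, sub_self]
  · refine (hlam _ ((hy3.mul hy3).sub (hom_C_mul (hy1.mul hy3) _))).1 ?_
    rw [map_sub, lC, h13, mul_one, sub_self]

end AMD

namespace AMD
variable {K : Type} [Field K] {r : ℕ}
variable {I : Ideal (PS K r)} {ls : List (PS K r)} {T : Type} [CommRing T] [Algebra K T]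
  {ι : T →ₐ[K] PS K r}

theorem isHom_span_set {s : Set (PS K r)} (hs : ∀ x ∈ s, ∃ k, x.IsHomogeneous k) :
    IsHomIdeal K r (Ideal.span s) := by
  intro p hp n
  refine Submodule.closure_induction (p := fun p _ => homogeneousComponent n p ∈ Ideal.span s)
    ?_ ?_ ?_ hp
  · simp
  · intro x y _ _ hx hy
    rw [map_add]; exact add_mem hx hy
  · intro g q hq
    obtain ⟨k, hk⟩ := hs q hq
    rw [smul_eq_mul]
    by_cases h : n < k
    · rw [comp_mul_lt hk g n h]; exact zero_mem _
    · obtain ⟨m, rfl⟩ := Nat.exists_eq_add_of_le' (not_lt.1 h)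
      rw [comp_mul hk]
      exact Ideal.mul_mem_left _ _ (Ideal.subset_span hq)

theorem lin_mem_span (D : Dat I ls ι) (f : PS K r) (hf : f.IsHomogeneous 1) (hN : f ∈ NN I ls) :
    f ∈ Ideal.span {x | x ∈ ls} := by
  obtain ⟨i, hi, s, hs, rfl⟩ := Submodule.mem_sup.1 hN
  have h1 : homogeneousComponent 1 i = 0 :=
    D.nd _ (D.hom i hi 1) (homogeneousComponent_isHomogeneous _ _)
  rw [← homogeneousComponent_eq_self hf, map_add, h1, zero_add]
  exact isHom_span_set (fun l hl => ⟨1, D.lin l hl⟩) s hs 1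

/-- spanning modulo a subideal containing the quadratic relations -/
theorem span_sub (D : Dat I ls ι) {y : Fin 3 → PS K r}
    (hsp : ∀ f : PS K r, f.IsHomogeneous 1 → ∃ κ : Fin 3 → K, f - ∑ i, C (κ i) * y i ∈ NN I ls)
    (hy : ∀ i, (y i).IsHomogeneous 1) (c : K) (Q : Ideal (PS K r))
    (h00 : y 0 * y 0 ∈ NN Q ls) (h01 : y 0 * y 1 ∈ NN Q ls) (h12 : y 1 * y 2 ∈ NN Q ls)
    (h11 : y 1 * y 1 - y 0 * y 2 ∈ NN Q ls) (h22 : y 2 * y 2 - C c * (y 0 * y 2) ∈ NN Q ls)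
    (f : PS K r) : ∃ κ : Fin 5 → K, f - ∑ i, C (κ i) * bas y (y 0 * y 2) i ∈ NN Q ls := by
  rw [← mem_W]
  set W := (NN Q ls).restrictScalars K ⊔ Submodule.span K (Set.range (bas y (y 0 * y 2))) with hW
  have hNW : ∀ x ∈ NN Q ls, x ∈ W := fun x hx => Submodule.mem_sup_left hx
  have hbW : ∀ i, bas y (y 0 * y 2) i ∈ W := fun i =>
    Submodule.mem_sup_right (Submodule.subset_span ⟨i, rfl⟩)
  have hw : y 0 * y 2 ∈ W := hbW 4
  have hyb : ∀ k i, y k * bas y (y 0 * y 2) i ∈ W := by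
    have a11 : y 1 * y 1 ∈ W := by simpa using add_mem (hNW _ h11) hw
    have a22 : y 2 * y 2 ∈ W := by
      have := add_mem (hNW _ h22) (W.smul_mem c hw)
      rw [smul_eq_C_mul] at this
      simpa using this
    have w0 : y 0 * (y 0 * y 2) ∈ W := by
      apply hNW; rw [← mul_assoc]; exact Ideal.mul_mem_right _ _ h00
    have w1 : y 1 * (y 0 * y 2) ∈ W := by
      apply hNW
      have := Ideal.mul_mem_right (y 2) _ h01
      convert this using 1; ring
    have w2 : y 2 * (y 0 * y 2) ∈ W := by
      apply hNW
      have := add_mem (Ideal.mul_mem_left _ (y 0) h22) (Ideal.mul_mem_left _ (C c * y 2) h00)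
      convert this using 1; ring
    intro k i
    fin_cases k <;> fin_cases i
    · simpa [bas] using hbW 1
    · exact hNW _ h00
    · exact hNW _ h01
    · exact hw
    · exact w0
    · simpa [bas] using hbW 2
    · exact (mul_comm (y 0) (y 1)) ▸ hNW _ h01
    · exact a11
    · exact hNW _ h12
    · exact w1
    · simpa [bas] using hbW 3
    · exact (mul_comm (y 0) (y 2)) ▸ hw
    · exact (mul_comm (y 1) (y 2)) ▸ hNW _ h12
    · exact a22
    · exact w2
  have hyW : ∀ k, ∀ x ∈ W, y k * x ∈ W := by
    intro k x hx
    rw [hW, mem_W] at hx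
    obtain ⟨κ, hκ⟩ := hx
    have h1 := hNW _ (Ideal.mul_mem_left _ (y k) hκ)
    have h2 : ∑ i, κ i • (y k * bas y (y 0 * y 2) i) ∈ W :=
      Submodule.sum_mem _ fun i _ => W.smul_mem _ (hyb k i)
    convert add_mem h1 h2 using 1
    simp only [smul_eq_C_mul, mul_sub, Finset.mul_sum, mul_left_comm (y k)]
    ring
  have hXW : ∀ i, ∀ x ∈ W, x * X i ∈ W := by
    intro i x hx
    obtain ⟨κ, hκ⟩ := hsp (X i) (isHomogeneous_X _ i)
    have h1 := lin_mem_span D _ ((isHomogeneous_X _ i).sub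
      (IsHomogeneous.sum _ _ _ fun k _ => hom_C_mul (hy k) (κ k))) hκ
    have h2 : x * (X i - ∑ k, C (κ k) * y k) ∈ W :=
      hNW _ (Ideal.mul_mem_left _ _ (Submodule.mem_sup_right h1))
    have h3 : ∑ k, κ k • (y k * x) ∈ W :=
      Submodule.sum_mem _ fun k _ => W.smul_mem _ (hyW k x hx)
    convert add_mem h2 h3 using 1
    simp only [smul_eq_C_mul, mul_sub, Finset.mul_sum]
    have : ∑ k, x * (C (κ k) * y k) = ∑ k, C (κ k) * (y k * x) :=
      Finset.sum_congr rfl fun k _ => by ring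
    rw [this]; ring
  induction f using MvPolynomial.induction_on with
  | C a =>
    have := W.smul_mem a (hbW 0)
    rw [smul_eq_C_mul] at this
    simpa [bas] using this
  | add p q hp hq => exact add_mem hp hq
  | mul_X p i hp => exact hXW i p hp

theorem pf_structure (D : Dat I ls ι) {y : Fin 3 → PS K r}
    (hsp : ∀ f : PS K r, f.IsHomogeneous 1 → ∃ κ : Fin 3 → K, f - ∑ i, C (κ i) * y i ∈ NN I ls)
    (hind : ∀ κ : Fin 3 → K, ∑ i, C (κ i) * y i ∈ NN I ls → κ = 0)
    (hy : ∀ i, (y i).IsHomogeneous 1) (c : K)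
    (h00 : y 0 * y 0 ∈ NN I ls) (h01 : y 0 * y 1 ∈ NN I ls) (h12 : y 1 * y 2 ∈ NN I ls)
    (h11 : y 1 * y 1 - y 0 * y 2 ∈ NN I ls) (h22 : y 2 * y 2 - C c * (y 0 * y 2) ∈ NN I ls)
    (hw : y 0 * y 2 ∉ NN I ls) :
    ∃ n : Fin 10 → PS K r, (∀ i, (n i).IsHomogeneous 1) ∧
      I = Ideal.span (Set.range (subPfaffian
        (sk (n 0) (n 1) (n 2) (n 3) (n 4) (n 5) (n 6) (n 7) (n 8) (n 9)))) := by
  let F : Fin 5 → PS K r := ![y 0 * y 0, y 0 * y 1, y 1 * y 2, y 1 * y 1 - y 0 * y 2,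
    y 2 * y 2 - C c * (y 0 * y 2)]
  have hF : ∀ j, (F j).IsHomogeneous 2 ∧ F j ∈ NN I ls := by
    intro j
    fin_cases j
    · exact ⟨(hy 0).mul (hy 0), h00⟩
    · exact ⟨(hy 0).mul (hy 1), h01⟩
    · exact ⟨(hy 1).mul (hy 2), h12⟩
    · exact ⟨((hy 1).mul (hy 1)).sub ((hy 0).mul (hy 2)), h11⟩
    · exact ⟨((hy 2).mul (hy 2)).sub (hom_C_mul ((hy 0).mul (hy 2)) c), h22⟩
  have hrep := fun j => deg_two_rep D hy hsp (F j) (hF j).1 (hF j).2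
  choose a b hab1 hab using hrep
  have hab' : ∀ j, Ideal.Quotient.mk I (F j) = Ideal.Quotient.mk I
      (ι (a j 0) * y 0 + ι (a j 1) * y 1 + ι (a j 2) * y 2 + ι (b j)) := by
    intro j
    rw [Ideal.Quotient.eq]
    have := hab j
    rwa [Fin.sum_univ_three] at this
  let c' : T := algebraMap K T c
  have hc' : ι c' = C c := by simp [c', AlgHom.commutes]
  let φ : T →+* PS K r ⧸ I := (Ideal.Quotient.mk I).comp (ι : T →+* PS K r)
  have hφ : ∀ t, φ t = Ideal.Quotient.mk I (ι t) := fun t => rfl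
  have hst := structure_eqs φ (Ideal.Quotient.mk I (y 0)) (Ideal.Quotient.mk I (y 1))
    (Ideal.Quotient.mk I (y 2)) c' a b (by
      intro α β1 β2 β3 γ h
      simp only [hφ, ← map_mul, ← map_add] at h
      rw [Ideal.Quotient.eq_zero_iff_mem] at h
      have := bas_free D hy hind ((hy 0).mul (hy 2)) hw ![α, β1, β2, β3, γ] (by
        rw [bas_sum]
        convert h using 1
        simp [Fin.sum_univ_succ]
        ring)
      exact ⟨this 0, this 1, this 2, this 3, this 4⟩)
    (by simpa [hφ, F] using hab' 0)
    (by simpa [hφ, F] using hab' 1)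
    (by simpa [hφ, F] using hab' 2)
    (by
      have := hab' 3
      simp only [F, Matrix.cons_val, map_sub, map_mul, map_add] at this
      simp only [hφ]
      linear_combination this)
    (by
      have := hab' 4
      simp only [F, Matrix.cons_val, map_sub, map_mul, map_add] at this
      simp only [hφ, hc']
      linear_combination this)
  have hpf := strMat_pf (ι : T →+* PS K r) (y 0) (y 1) (y 2) c' a b hst
  set M := strMat (ι : T →+* PS K r) (y 0) (y 1) (y 2) c' a with hM
  set Q := Ideal.span (Set.range (subPfaffian M)) with hQ
  have hrel : ∀ j, F j - (ι (a j 0) * y 0 + ι (a j 1) * y 1 + ι (a j 2) * y 2 + ι (b j)) =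
      subPfaffian M j ∨
      F j - (ι (a j 0) * y 0 + ι (a j 1) * y 1 + ι (a j 2) * y 2 + ι (b j)) =
      - subPfaffian M j := by
    intro j
    rw [hpf]
    fin_cases j
    · right; simp [F]
    · left; simp [F]
    · right; simp [F]
    · left; simp [F]; ring
    · right; simp [F, hc']; ring
  have hrelQ : ∀ j, F j - (ι (a j 0) * y 0 + ι (a j 1) * y 1 + ι (a j 2) * y 2 + ι (b j)) ∈ Q := by
    intro j
    have h1 : subPfaffian M j ∈ Q := Ideal.subset_span ⟨j, rfl⟩
    rcases hrel j with h | h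
    · rw [h]; exact h1
    · rw [h]; exact neg_mem h1
  have hFQ : ∀ j, F j ∈ NN Q ls := by
    intro j
    have h1 : F j - (ι (a j 0) * y 0 + ι (a j 1) * y 1 + ι (a j 2) * y 2 + ι (b j)) ∈ NN Q ls :=
      Submodule.mem_sup_left (hrelQ j)
    have h2 : ι (a j 0) * y 0 + ι (a j 1) * y 1 + ι (a j 2) * y 2 + ι (b j) ∈ NN Q ls := by
      refine Submodule.mem_sup_right (add_mem (add_mem (add_mem ?_ ?_) ?_) (hab1 j).2.2)
      · exact Ideal.mul_mem_right _ _ ((hab1 j).2.1 0)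
      · exact Ideal.mul_mem_right _ _ ((hab1 j).2.1 1)
      · exact Ideal.mul_mem_right _ _ ((hab1 j).2.1 2)
    simpa using add_mem h1 h2
  let n : Fin 10 → PS K r := ![ι c' * y 2 + ι (a 4 0), -y 2 - ι (a 3 0), ι (a 2 0),
    y 1 - ι (a 1 0), y 1 + ι (a 1 0) - ι (a 3 1), -y 2 + ι (a 2 1), -y 0 + ι (a 0 0) - ι (a 1 1),
    y 0 - ι (a 1 1), ι (a 0 2), ι (a 0 1)]
  have hn : ∀ i, (n i).IsHomogeneous 1 := by
    have ha := fun j k => (hab1 j).1 k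
    intro i
    fin_cases i
    · change (ι c' * y 2 + ι (a 4 0)).IsHomogeneous 1
      rw [hc']; exact (hom_C_mul (hy 2) c).add (ha 4 0)
    · exact (hy 2).neg.sub (ha 3 0)
    · exact ha 2 0
    · exact (hy 1).sub (ha 1 0)
    · exact ((hy 1).add (ha 1 0)).sub (ha 3 1)
    · exact (hy 2).neg.add (ha 2 1)
    · exact ((hy 0).neg.add (ha 0 0)).sub (ha 1 1)
    · exact (hy 0).sub (ha 1 1)
    · exact ha 0 2
    · exact ha 0 1
  have hMn : M = sk (n 0) (n 1) (n 2) (n 3) (n 4) (n 5) (n 6) (n 7) (n 8) (n 9) := rfl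
  refine ⟨n, hn, ?_⟩
  rw [← hMn]
  have hQI : Q ≤ I := by
    rw [hQ, Ideal.span_le]
    rintro _ ⟨j, rfl⟩
    have h1 := hab j
    rw [Fin.sum_univ_three] at h1
    rcases hrel j with h | h
    · rw [h] at h1; exact h1
    · rw [h] at h1; exact (neg_mem_iff).1 h1
  have hQh : IsHomIdeal K r Q := by
    apply isHom_span_set
    rintro _ ⟨j, rfl⟩
    refine ⟨2, ?_⟩
    rw [hMn, sk_pf]
    fin_cases j
    all_goals exact ((((hn _).mul (hn _)).sub ((hn _).mul (hn _))).add ((hn _).mul (hn _)))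
  have hdeg : ∀ i : Fin 5, (bas y (y 0 * y 2) i).IsHomogeneous
      ((![0, 1, 1, 1, 2] : Fin 5 → ℕ) i) := by
    intro i
    fin_cases i
    · exact isHomogeneous_one _ _
    · exact hy 0
    · exact hy 1
    · exact hy 2
    · exact (hy 0).mul (hy 2)
  refine le_antisymm ?_ hQI
  intro f hf
  obtain ⟨p, hp⟩ := span_lemma hQh D.lin D.ex (bas y (y 0 * y 2)) _ hdeg
    (span_sub D hsp hy c Q (hFQ 0) (hFQ 1) (hFQ 2) (hFQ 3) (hFQ 4)) f
  have h1 : ∑ i, ι (p i) * bas y (y 0 * y 2) i ∈ I := by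
    have := sub_mem hf (hQI hp)
    simpa using this
  have h2 := bas_free D hy hind ((hy 0).mul (hy 2)) hw p h1
  simpa [h2] using hp

end AMD

namespace AMD
variable {K : Type} [Field K] {r : ℕ}

/-- dimension of the graded piece of degree `n - k` -/
def gd (K : Type) [Field K] (r : ℕ) (n k : ℕ) : ℤ :=
  if k ≤ n then (Module.finrank K (gr K r (n - k)) : ℤ) else 0

theorem hilb_coeff (I : Ideal (PS K r)) {d : ℕ} (hcodim : d + 3 = r)
    (hH : hilbSeries K r I * (1 - PowerSeries.X) ^ (d + 1) =
      1 + 3 * PowerSeries.X + PowerSeries.X ^ 2) (n : ℕ) :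
    (Module.finrank K (gr K r n ⊓ I.restrictScalars K : Submodule K (PS K r)) : ℤ) =
      5 * gd K r n 2 - 5 * gd K r n 3 + gd K r n 5 := by
  subst hcodim
  have h1 := hilb_S (K := K) (r := d + 3)
  set HS : PowerSeries ℤ := PowerSeries.mk fun n => (Module.finrank K (gr K (d+3) n) : ℤ) with hHS
  have h2 : hilbSeries K (d+3) I = HS * PowerSeries.X ^ 0 - 5 * (HS * PowerSeries.X ^ 2)
      + 5 * (HS * PowerSeries.X ^ 3) - HS * PowerSeries.X ^ 5 := by
    calc hilbSeries K (d+3) I = hilbSeries K (d+3) I * (HS * (1 - PowerSeries.X)^(d+3+1)) := by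
          rw [h1, mul_one]
      _ = (hilbSeries K (d+3) I * (1 - PowerSeries.X) ^ (d + 1)) * (HS * (1 - PowerSeries.X)^3) := by
          ring
      _ = _ := by rw [hH]; ring
  have h3 := congrArg (PowerSeries.coeff n) h2
  have e5 : (5 : PowerSeries ℤ) = PowerSeries.C 5 := by simp
  rw [e5] at h3
  simp only [map_sub, map_add, PowerSeries.coeff_C_mul, PowerSeries.coeff_mul_X_pow'] at h3
  simp only [hilbSeries, hHS, PowerSeries.coeff_mk] at h3
  have h4 := quot_add I n
  simp only [gd]
  simp only [zero_le, if_true, Nat.sub_zero] at h3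
  zify at h4
  linarith

section
variable (M : Matrix (Fin 5) (Fin 5) (PS K r)) (q : Fin 5 → PS K r)

/-- inclusion of the graded piece -/
def imap (n : ℕ) : (Fin 5 → gr K r n) →ₗ[K] (Fin 5 → PS K r) :=
  LinearMap.pi fun i => (gr K r n).subtype ∘ₗ LinearMap.proj i

/-- graded piece of the row map -/
def qmap (n : ℕ) : (Fin 5 → gr K r n) →ₗ[K] PS K r :=
  ∑ j, LinearMap.mulLeft K (q j) ∘ₗ (gr K r n).subtype ∘ₗ LinearMap.proj j

/-- graded piece of the matrix map -/
def Mmap (n : ℕ) : (Fin 5 → gr K r n) →ₗ[K] (Fin 5 → PS K r) :=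
  (M.mulVecLin.restrictScalars K) ∘ₗ imap n

theorem imap_apply (n : ℕ) (v : Fin 5 → gr K r n) (i) : imap n v i = (v i : PS K r) := rfl

theorem imap_inj (n : ℕ) : Function.Injective (imap (K := K) (r := r) n) := by
  intro a b h
  funext i
  exact Subtype.ext (congrFun h i)

theorem qmap_apply (n : ℕ) (v : Fin 5 → gr K r n) : qmap q n v = ∑ j, q j * (v j : PS K r) := by
  simp [qmap]

theorem Mmap_apply (n : ℕ) (v : Fin 5 → gr K r n) :
    Mmap M n v = M.mulVec (fun j => (v j : PS K r)) := rfl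

theorem finrank_V (n : ℕ) : Module.finrank K (Fin 5 → gr K r n) = 5 * Module.finrank K (gr K r n) := by
  simp [Module.finrank_pi_fintype]

variable {M q}

theorem qmap_range (hq : ∀ j, (q j).IsHomogeneous 2) (n : ℕ) :
    LinearMap.range (qmap q n) = gr K r (n + 2) ⊓ (Ideal.span (Set.range q)).restrictScalars K := by
  ext x
  constructor
  · rintro ⟨v, rfl⟩
    rw [qmap_apply]
    refine ⟨?_, ?_⟩
    · refine Submodule.sum_mem _ fun j _ => ?_
      rw [mul_comm]
      exact IsHomogeneous.mul (v j).2 (hq j)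
    · exact Ideal.sum_mem _ fun j _ => Ideal.mul_mem_right _ _ (Ideal.subset_span ⟨j, rfl⟩)
  · rintro ⟨h1, h2⟩
    have h2 : x ∈ Ideal.span (Set.range q) := h2
    obtain ⟨c, hc⟩ := (Ideal.mem_span_range_iff_exists_fun).1 h2
    refine ⟨fun j => ⟨homogeneousComponent n (c j), homogeneousComponent_isHomogeneous _ _⟩, ?_⟩
    rw [qmap_apply, ← homogeneousComponent_eq_self (show x.IsHomogeneous (n+2) from h1), ← hc, map_sum]
    refine Finset.sum_congr rfl fun j _ => ?_
    rw [comp_mul (hq j), mul_comm]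

theorem qmap_ker (hq : ∀ j, (q j).IsHomogeneous 2) {d : ℕ} (hcodim : d + 3 = r)
    (hH : hilbSeries K r (Ideal.span (Set.range q)) * (1 - PowerSeries.X) ^ (d + 1) =
      1 + 3 * PowerSeries.X + PowerSeries.X ^ 2) (n : ℕ) :
    (Module.finrank K (LinearMap.ker (qmap q n)) : ℤ) = 5 * gd K r n 1 - gd K r n 3 := by
  have h1 := LinearMap.finrank_range_add_finrank_ker (qmap q n)
  rw [qmap_range hq, finrank_V] at h1
  have h2 := hilb_coeff _ hcodim hH (n + 2)
  have e2 : gd K r (n+2) 2 = Module.finrank K (gr K r n) := by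
    rw [gd, if_pos (by omega)]; rfl
  have e3 : gd K r (n+2) 3 = gd K r n 1 := by
    simp only [gd]
    have : n + 2 - 3 = n - 1 := by omega
    rw [this]
    simp
  have e5 : gd K r (n+2) 5 = gd K r n 3 := by
    simp only [gd]
    have : n + 2 - 5 = n - 3 := by omega
    rw [this]
    simp
  rw [e2, e3, e5] at h2
  zify at h1
  linarith

theorem q_indep (hq : ∀ j, (q j).IsHomogeneous 2) {d : ℕ} (hcodim : d + 3 = r)
    (hH : hilbSeries K r (Ideal.span (Set.range q)) * (1 - PowerSeries.X) ^ (d + 1) =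
      1 + 3 * PowerSeries.X + PowerSeries.X ^ 2) (v : Fin 5 → PS K r)
    (hv : ∀ j, (v j).IsHomogeneous 0) (h : ∑ j, q j * v j = 0) : v = 0 := by
  have h1 := qmap_ker hq hcodim hH 0
  simp only [gd] at h1
  norm_num at h1
  have h2 : (fun j => (⟨v j, hv j⟩ : gr K r 0)) ∈ LinearMap.ker (qmap q 0) := by
    rw [LinearMap.mem_ker, qmap_apply]; exact h
  rw [h1, Submodule.mem_bot] at h2
  funext j
  exact congrArg Subtype.val (congrFun h2 j)

theorem Mmap_ker (hq : ∀ j, (q j).IsHomogeneous 2)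
    (hex : ∀ v, M.mulVec v = 0 → ∃ s : PS K r, v = fun j => s * q j) (n : ℕ) :
    (Module.finrank K (LinearMap.ker (Mmap M n)) : ℤ) ≤ gd K r n 2 := by
  by_cases hn : 2 ≤ n
  · obtain ⟨m, rfl⟩ := Nat.exists_eq_add_of_le' hn
    simp only [gd, hn, if_true]
    norm_cast
    let g : gr K r m →ₗ[K] (Fin 5 → PS K r) :=
      LinearMap.pi fun j => LinearMap.mulRight K (q j) ∘ₗ (gr K r m).subtype
    have hle : (LinearMap.ker (Mmap M (m+2))).map (imap (m+2)) ≤ LinearMap.range g := by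
      rintro _ ⟨v, hv, rfl⟩
      have hv : Mmap M (m+2) v = 0 := hv
      obtain ⟨s, hs⟩ := hex _ ((Mmap_apply M _ v).symm.trans hv)
      refine ⟨⟨homogeneousComponent m s, homogeneousComponent_isHomogeneous _ _⟩, ?_⟩
      funext j
      rw [imap_apply, ← homogeneousComponent_eq_self (show (v j : PS K r).IsHomogeneous (m+2) from (v j).2)]
      rw [congrFun hs j, comp_mul (hq j)]
      rfl
    have h1 := (Submodule.finrank_mono hle).trans (LinearMap.finrank_range_le g)
    rwa [← LinearEquiv.finrank_eq (Submodule.equivMapOfInjective _ (imap_inj _) _)] at h1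
  · simp only [gd, hn, if_false]
    have : LinearMap.ker (Mmap M n) = ⊥ := by
      rw [eq_bot_iff]
      intro v hv
      have hv : Mmap M n v = 0 := hv
      obtain ⟨s, hs⟩ := hex _ ((Mmap_apply M _ v).symm.trans hv)
      rw [Submodule.mem_bot]
      funext j
      apply Subtype.ext
      rw [← homogeneousComponent_eq_self (show (v j : PS K r).IsHomogeneous n from (v j).2)]
      rw [congrFun hs j, comp_mul_lt (hq j) _ _ (by omega)]
      rfl
    rw [this]; simp

theorem exact_hom (hq : ∀ j, (q j).IsHomogeneous 2) (hM : ∀ i j, (M i j).IsHomogeneous 1)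
    {d : ℕ} (hcodim : d + 3 = r)
    (hH : hilbSeries K r (Ideal.span (Set.range q)) * (1 - PowerSeries.X) ^ (d + 1) =
      1 + 3 * PowerSeries.X + PowerSeries.X ^ 2)
    (hex : ∀ v, M.mulVec v = 0 → ∃ s : PS K r, v = fun j => s * q j)
    (hc : ∀ u, ∑ j, q j * (M.mulVec u) j = 0) (n : ℕ) (v : Fin 5 → PS K r)
    (hv : ∀ j, (v j).IsHomogeneous n) (h : ∑ j, q j * v j = 0) :
    v ∈ LinearMap.range M.mulVecLin := by
  cases n with
  | zero => rw [q_indep hq hcodim hH v hv h]; exact zero_mem _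
  | succ m =>
    have hle : LinearMap.range (Mmap M m) ≤ (LinearMap.ker (qmap q (m+1))).map (imap (m+1)) := by
      rintro _ ⟨u, rfl⟩
      have hu : ∀ i, (Mmap M m u i).IsHomogeneous (m+1) := by
        intro i
        rw [Mmap_apply]
        refine Submodule.sum_mem (gr K r (m+1)) fun j _ => ?_
        rw [mul_comm]
        exact IsHomogeneous.mul (u j).2 (hM i j)
      refine ⟨fun i => ⟨_, hu i⟩, ?_, rfl⟩
      change qmap q (m+1) _ = 0
      rw [qmap_apply]
      exact hc _
    have h1 := qmap_ker hq hcodim hH (m+1)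
    have h2 := Mmap_ker hq hex m
    have h3 := LinearMap.finrank_range_add_finrank_ker (Mmap M m)
    rw [finrank_V] at h3
    have e1 : gd K r (m+1) 1 = Module.finrank K (gr K r m) := by simp [gd]
    have e3 : gd K r (m+1) 3 = gd K r m 2 := by
      simp only [gd]
      have : m + 1 - 3 = m - 2 := by omega
      rw [this]
      simp
    rw [e1, e3] at h1
    have h4 := Submodule.eq_of_le_of_finrank_le hle (by
      rw [← LinearEquiv.finrank_eq (Submodule.equivMapOfInjective _ (imap_inj _) _)]
      omega)
    have h5 : v ∈ (LinearMap.ker (qmap q (m+1))).map (imap (m+1)) := by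
      refine ⟨fun i => ⟨v i, hv i⟩, ?_, rfl⟩
      change qmap q (m+1) _ = 0
      rw [qmap_apply]
      exact h
    rw [← h4] at h5
    obtain ⟨u, hu⟩ := h5
    exact ⟨fun j => (u j : PS K r), hu⟩

theorem exact_mid (hq : ∀ j, (q j).IsHomogeneous 2) (hM : ∀ i j, (M i j).IsHomogeneous 1)
    {d : ℕ} (hcodim : d + 3 = r)
    (hH : hilbSeries K r (Ideal.span (Set.range q)) * (1 - PowerSeries.X) ^ (d + 1) =
      1 + 3 * PowerSeries.X + PowerSeries.X ^ 2)
    (hex : ∀ v, M.mulVec v = 0 → ∃ s : PS K r, v = fun j => s * q j)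
    (hc : ∀ u, ∑ j, q j * (M.mulVec u) j = 0) (v : Fin 5 → PS K r)
    (h : ∑ j, q j * v j = 0) :
    ∃ u, M.mulVec u = v := by
  have h1 : ∀ n, (fun j => homogeneousComponent n (v j)) ∈ LinearMap.range M.mulVecLin := by
    intro n
    refine exact_hom hq hM hcodim hH hex hc n _ (fun j => homogeneousComponent_isHomogeneous _ _) ?_
    have := congrArg (homogeneousComponent (n+2)) h
    rw [map_sum, map_zero] at this
    rw [← this]
    refine Finset.sum_congr rfl fun j _ => ?_
    rw [mul_comm (q j) (v j), comp_mul (hq j), mul_comm]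
  let N := ∑ j, ((v j).totalDegree + 1)
  have h2 : v = ∑ n ∈ Finset.range N, fun j => homogeneousComponent n (v j) := by
    funext j
    rw [Finset.sum_apply]
    conv_lhs => rw [← sum_homogeneousComponent (v j)]
    refine Finset.sum_subset ?_ ?_
    · intro x hx
      rw [Finset.mem_range] at hx ⊢
      exact lt_of_lt_of_le hx (Finset.single_le_sum (f := fun j => (v j).totalDegree + 1)
        (fun _ _ => Nat.zero_le _) (Finset.mem_univ j))
    · intro x _ hx
      rw [Finset.mem_range] at hx
      exact homogeneousComponent_eq_zero _ _ (by omega)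
  have h3 : v ∈ LinearMap.range M.mulVecLin := by
    rw [h2]
    exact Submodule.sum_mem _ fun n _ => h1 n
  obtain ⟨u, hu⟩ := h3
  exact ⟨u, hu⟩
end

theorem quadric_prime {I : Ideal (PS K r)} (hI : I.IsPrime) (hhom : IsHomIdeal K r I)
    (hnd : Nondeg K r I) {p : PS K r} (hp : p.IsHomogeneous 2) (hpI : p ∈ I) (h0 : p ≠ 0) :
    Prime p := by
  have key : ∀ a b : PS K r, p = a * b → a ∈ I → IsUnit b := by
    intro a b hab ha
    have ha0 : a ≠ 0 := by rintro rfl; simp [hab] at h0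
    have hb0 : b ≠ 0 := by rintro rfl; simp [hab] at h0
    have h1 : 2 ≤ a.totalDegree := by
      by_contra hlt
      apply ha0
      rw [← sum_homogeneousComponent a]
      refine Finset.sum_eq_zero fun i hi => ?_
      rw [Finset.mem_range] at hi
      have hi2 : i = 0 ∨ i = 1 := by omega
      rcases hi2 with rfl | rfl
      · exact hom_zero_mem I hI.ne_top _ (homogeneousComponent_isHomogeneous _ _) (hhom a ha 0)
      · exact hnd _ (hhom a ha 1) (homogeneousComponent_isHomogeneous _ _)
    have h2 := totalDegree_mul_of_isDomain ha0 hb0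
    rw [← hab, hp.totalDegree h0] at h2
    have h3 : b.totalDegree = 0 := by omega
    rw [totalDegree_eq_zero_iff_eq_C] at h3
    rw [h3]
    apply IsUnit.map
    rw [isUnit_iff_ne_zero]
    intro h4
    rw [h4] at h3
    exact hb0 (by simpa using h3)
  apply Irreducible.prime
  refine ⟨fun hu => hI.ne_top (Ideal.eq_top_of_isUnit_mem _ hpI hu), ?_⟩
  intro a b hab
  rcases hI.mem_or_mem (hab ▸ hpI) with ha | hb
  · exact Or.inr (key a b hab ha)
  · exact Or.inl (key b a (by rw [hab, mul_comm]) hb)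

end AMD

namespace AMD
variable {K : Type} [Field K] {r : ℕ}

/-- matrix from ten entries -/
def skn (n : Fin 10 → PS K r) : Matrix (Fin 5) (Fin 5) (PS K r) :=
  sk (n 0) (n 1) (n 2) (n 3) (n 4) (n 5) (n 6) (n 7) (n 8) (n 9)

/-- signed Pfaffians -/
def spf (n : Fin 10 → PS K r) (j : Fin 5) : PS K r := (-1) ^ (j : ℕ) * subPfaffian (skn n) j

theorem spf_span (n : Fin 10 → PS K r) :
    Ideal.span (Set.range (spf n)) = Ideal.span (Set.range (subPfaffian (skn n))) := by
  apply le_antisymm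
  · rw [Ideal.span_le]
    rintro _ ⟨j, rfl⟩
    exact Ideal.mul_mem_left _ _ (Ideal.subset_span ⟨j, rfl⟩)
  · rw [Ideal.span_le]
    rintro _ ⟨j, rfl⟩
    have : subPfaffian (skn n) j = (-1) ^ (j : ℕ) * spf n j := by
      rw [spf, ← mul_assoc, ← mul_pow]; simp
    rw [this]
    exact Ideal.mul_mem_left _ _ (Ideal.subset_span ⟨j, rfl⟩)

theorem skn_hom {n : Fin 10 → PS K r} (hn : ∀ i, (n i).IsHomogeneous 1) (i j : Fin 5) :
    (skn n i j).IsHomogeneous 1 := by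
  have h0 : (0 : PS K r).IsHomogeneous 1 := isHomogeneous_zero _ _ _
  have hneg := fun i => (hn i).neg
  fin_cases i <;> fin_cases j <;> first | exact h0 | exact hn _ | exact hneg _

theorem pf_hom {n : Fin 10 → PS K r} (hn : ∀ i, (n i).IsHomogeneous 1) (j : Fin 5) :
    (subPfaffian (skn n) j).IsHomogeneous 2 :=
  (((skn_hom hn _ _).mul (skn_hom hn _ _)).sub ((skn_hom hn _ _).mul (skn_hom hn _ _))).add
    ((skn_hom hn _ _).mul (skn_hom hn _ _))

theorem spf_hom {n : Fin 10 → PS K r} (hn : ∀ i, (n i).IsHomogeneous 1) (j : Fin 5) :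
    (spf n j).IsHomogeneous 2 := by
  have : spf n j = C ((-1) ^ (j : ℕ)) * subPfaffian (skn n) j := by simp [spf]
  rw [this]
  exact hom_C_mul (pf_hom hn j) _

theorem skn_mul_spf (n : Fin 10 → PS K r) : (skn n).mulVec (spf n) = 0 :=
  sk_syz _ _ _ _ _ _ _ _ _ _

theorem spf_mul_skn (n : Fin 10 → PS K r) (u : Fin 5 → PS K r) :
    ∑ j, spf n j * ((skn n).mulVec u) j = 0 := by
  change spf n ⬝ᵥ (skn n).mulVec u = 0
  have h : (skn n).transpose = - skn n := sk_transpose _ _ _ _ _ _ _ _ _ _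
  rw [Matrix.dotProduct_mulVec, ← Matrix.mulVec_transpose, h, Matrix.neg_mulVec, skn_mul_spf]
  simp

theorem pf_indep {I : Ideal (PS K r)} {n : Fin 10 → PS K r} (hI : I.IsPrime) (hhom : IsHomIdeal K r I)
  (hnd : Nondeg K r I) (hn : ∀ i, (n i).IsHomogeneous 1)
  (hIn : I = Ideal.span (Set.range (subPfaffian (skn n)))) {d : ℕ} (hcodim : d + 3 = r)
  (hH : hilbSeries K r I * (1 - PowerSeries.X) ^ (d + 1) =
      1 + 3 * PowerSeries.X + PowerSeries.X ^ 2)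
    (v : Fin 5 → PS K r)
    (hv : ∀ j, (v j).IsHomogeneous 0) (h : ∑ j, spf n j * v j = 0) : v = 0 := by
  rw [hIn, ← spf_span] at hH
  exact q_indep (spf_hom hn) hcodim hH v hv h

theorem exact_left {I : Ideal (PS K r)} {n : Fin 10 → PS K r} (hI : I.IsPrime) (hhom : IsHomIdeal K r I)
  (hnd : Nondeg K r I) (hn : ∀ i, (n i).IsHomogeneous 1)
  (hIn : I = Ideal.span (Set.range (subPfaffian (skn n)))) {d : ℕ} (hcodim : d + 3 = r)
  (hH : hilbSeries K r I * (1 - PowerSeries.X) ^ (d + 1) =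
      1 + 3 * PowerSeries.X + PowerSeries.X ^ 2)
    : (∀ v, (skn n).mulVec v = 0 → ∃ s : PS K r, v = fun j => s * spf n j) ∧
    spf n 1 ≠ 0 := by
  have hz : (0 : PS K r).IsHomogeneous 0 := isHomogeneous_zero _ _ _
  have h10 : spf n 1 ≠ 0 := by
    intro h
    have := pf_indep hI hhom hnd hn hIn hcodim hH (Pi.single 1 1) (by
      intro j
      by_cases hj : j = 1
      · subst hj; simpa using isHomogeneous_one _ _
      · simpa [hj] using hz) (by
      simp [Pi.single_apply, h])
    simpa using congrFun this 1
  have hpf1 : spf n 1 = - subPfaffian (skn n) 1 := by simp [spf]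
  have hpf0 : spf n 0 = subPfaffian (skn n) 0 := by simp [spf]
  have hp0 : subPfaffian (skn n) 1 ≠ 0 := by
    intro h; apply h10; rw [hpf1, h, neg_zero]
  have hmem : subPfaffian (skn n) 1 ∈ I := by rw [hIn]; exact Ideal.subset_span ⟨1, rfl⟩
  have hpr := quadric_prime hI hhom hnd (pf_hom hn 1) hmem hp0
  have hnd0 : ¬ subPfaffian (skn n) 1 ∣ subPfaffian (skn n) 0 := by
    rintro ⟨c, hc⟩
    have h2 : subPfaffian (skn n) 0 = homogeneousComponent 0 c * subPfaffian (skn n) 1 := by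
      rw [← comp_mul (pf_hom hn 1), mul_comm c, ← hc, homogeneousComponent_eq_self (pf_hom hn 0)]
    have := pf_indep hI hhom hnd hn hIn hcodim hH ![1, homogeneousComponent 0 c, 0, 0, 0] (by
      intro j
      fin_cases j
      · exact isHomogeneous_one _ _
      · exact homogeneousComponent_isHomogeneous _ _
      · exact hz
      · exact hz
      · exact hz) (by
      rw [Fin.sum_univ_five, hpf0, hpf1, h2]
      simp; ring)
    simpa using congrFun this 0
  refine ⟨?_, h10⟩
  intro v hv
  have hk := sk_koszul (skn n) _ _ _ _ _ _ _ _ _ _ rfl v hv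
  have h0 := hk 0
  have hd : subPfaffian (skn n) 1 ∣ v 1 * subPfaffian (skn n) 0 := by
    refine ⟨- v 0, ?_⟩
    simp at h0
    linear_combination h0
  rcases hpr.dvd_or_dvd hd with ⟨t, ht⟩ | h
  · refine ⟨-t, ?_⟩
    funext j
    apply mul_right_cancel₀ hp0
    rw [hk j, ht, spf]
    ring
  · exact absurd h hnd0

theorem exact_right {I : Ideal (PS K r)} {n : Fin 10 → PS K r} (hI : I.IsPrime) (hhom : IsHomIdeal K r I)
  (hnd : Nondeg K r I) (hn : ∀ i, (n i).IsHomogeneous 1)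
  (hIn : I = Ideal.span (Set.range (subPfaffian (skn n)))) {d : ℕ} (hcodim : d + 3 = r)
  (hH : hilbSeries K r I * (1 - PowerSeries.X) ^ (d + 1) =
      1 + 3 * PowerSeries.X + PowerSeries.X ^ 2)
    (v : Fin 5 → PS K r) (h : ∑ j, spf n j * v j = 0) :
    ∃ u, (skn n).mulVec u = v := by
  have hex := (exact_left hI hhom hnd hn hIn hcodim hH).1
  rw [hIn, ← spf_span] at hH
  exact exact_mid (spf_hom hn) (skn_hom hn) hcodim hH hex (spf_mul_skn n) v h
end AMD

namespace AMD
variable {K : Type} [Field K] {r : ℕ}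

/-- index bijection for a free module concentrated in a single row -/
def rowEquiv (b : ℕ → ℕ) (j0 N : ℕ) (h0 : b j0 = N) (h : ∀ j, j ≠ j0 → b j = 0) :
    ((j : ℕ) × Fin (b j)) ≃ Fin N where
  toFun x := ⟨x.2.1, by
    rcases x with ⟨j, t⟩
    by_cases hj : j = j0
    · subst hj; exact h0 ▸ t.2
    · have := t.2; have := h j hj; simp only; omega⟩
  invFun t := ⟨j0, ⟨t.1, by rw [h0]; exact t.2⟩⟩
  left_inv := by
    rintro ⟨j, t⟩
    by_cases hj : j = j0
    · subst hj; rfl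
    · have := t.2; have := h j hj; omega
  right_inv := by intro t; rfl

theorem row_eq (b : ℕ → ℕ) (j0 : ℕ) (h : ∀ j, j ≠ j0 → b j = 0) {j : ℕ} (t : Fin (b j)) : j = j0 := by
  by_contra hj
  have := t.2; have := h j hj; omega

/-- coordinates of a free module concentrated in a single row -/
def rowCoord (b : ℕ → ℕ) {N : ℕ} (e : ((j : ℕ) × Fin (b j)) ≃ Fin N) :
    FreeGr K r b ≃ₗ[PS K r] (Fin N → PS K r) :=
  (Finsupp.domLCongr e).trans (Finsupp.linearEquivFunOnFinite (PS K r) (PS K r) (Fin N))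

theorem rowCoord_single (b : ℕ → ℕ) {N : ℕ} (e : ((j : ℕ) × Fin (b j)) ≃ Fin N) (x) :
    rowCoord (K := K) (r := r) b e (Finsupp.single x 1) = Pi.single (e x) 1 := by
  simp [rowCoord]

theorem rowCoord_symm (b : ℕ → ℕ) {N : ℕ} (e : ((j : ℕ) × Fin (b j)) ≃ Fin N) (v) (x) :
    (rowCoord (K := K) (r := r) b e).symm v x = v (e x) := by
  simp [rowCoord]

theorem betti (I : Ideal (PS K r)) (M : Matrix (Fin 5) (Fin 5) (PS K r)) (q : Fin 5 → PS K r)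
    (hM : ∀ i j, (M i j).IsHomogeneous 1) (hq : ∀ i, (q i).IsHomogeneous 2)
    (hI : Ideal.span (Set.range q) = I)
    (hMq : M.mulVec q = 0) (hqM : ∀ u, ∑ j, q j * (M.mulVec u) j = 0)
    (hq1 : q 1 ≠ 0)
    (hex1 : ∀ v, M.mulVec v = 0 → ∃ s : PS K r, v = fun j => s * q j)
    (hex2 : ∀ v : Fin 5 → PS K r, ∑ j, q j * v j = 0 → ∃ u, M.mulVec u = v)
    (b : ℕ → ℕ → ℕ) (h11 : b 1 1 = 5) (h1 : ∀ j, j ≠ 1 → b 1 j = 0)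
    (h21 : b 2 1 = 5) (h2 : ∀ j, j ≠ 1 → b 2 j = 0)
    (h32 : b 3 2 = 1) (h3 : ∀ j, j ≠ 2 → b 3 j = 0)
    (h4 : ∀ i j, b (i + 4) j = 0) : HasBettiDiagram K r I b := by
  let e1 := rowEquiv (b 1) 1 5 h11 h1
  let e2 := rowEquiv (b 2) 1 5 h21 h2
  let e3 := rowEquiv (b 3) 2 1 h32 h3
  let E1 := rowCoord (K := K) (r := r) (b 1) e1
  let E2 := rowCoord (K := K) (r := r) (b 2) e2
  let E3 := rowCoord (K := K) (r := r) (b 3) e3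
  let f0 : FreeGr K r (b 2) →ₗ[PS K r] FreeGr K r (b 1) :=
    E1.symm.toLinearMap ∘ₗ M.mulVecLin ∘ₗ E2.toLinearMap
  let f1 : FreeGr K r (b 3) →ₗ[PS K r] FreeGr K r (b 2) :=
    E2.symm.toLinearMap ∘ₗ (LinearMap.toSpanSingleton (PS K r) _ q) ∘ₗ
      (LinearMap.proj 0) ∘ₗ E3.toLinearMap
  let φ : (i : ℕ) → (FreeGr K r (b (i + 2)) →ₗ[PS K r] FreeGr K r (b (i + 1))) := fun i =>
    match i with
    | 0 => f0
    | 1 => f1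
    | _ + 2 => 0
  let ε : FreeGr K r (b 1) →ₗ[PS K r] PS K r :=
    (Fintype.linearCombination (PS K r) q) ∘ₗ E1.toLinearMap
  have hε : ∀ x, ε x = ∑ j, q j * E1 x j := by
    intro x
    simp only [ε, LinearMap.comp_apply, LinearEquiv.coe_coe, Fintype.linearCombination_apply,
      smul_eq_mul]
    exact Finset.sum_congr rfl fun j _ => mul_comm _ _
  have hf0 : ∀ x, f0 x = E1.symm (M.mulVec (E2 x)) := fun x => rfl
  have hf1 : ∀ x, f1 x = E2.symm (E3 x 0 • q) := fun x => rfl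
  refine ⟨φ, ε, ?_, ?_, ?_, ?_, ?_⟩
  · intro j t
    have hj := row_eq (b 1) 1 h1 t
    rw [hε]
    simp only [E1]
    rw [rowCoord_single]
    simp only [Pi.single_apply, mul_ite, mul_one, mul_zero, Finset.sum_ite_eq', Finset.mem_univ,
      if_true]
    have h12 : 1 + j = 2 := by omega
    rw [h12]
    exact hq _
  · intro i
    match i with
    | 0 =>
      intro j t j' t'
      right
      refine ⟨1, le_rfl, ?_, ?_⟩
      · have hj := row_eq (b 2) 1 h2 t
        have hj' := row_eq (b 1) 1 h1 t'
        omega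
      · change (f0 _ _).IsHomogeneous 1
        rw [hf0]
        simp only [E1, E2]
        rw [rowCoord_symm, rowCoord_single, Matrix.mulVec_single_one]
        exact hM _ _
    | 1 =>
      intro j t j' t'
      right
      refine ⟨2, by norm_num, ?_, ?_⟩
      · have hj := row_eq (b 3) 2 h3 t
        have hj' := row_eq (b 2) 1 h2 t'
        omega
      · change (f1 _ _).IsHomogeneous 2
        rw [hf1]
        simp only [E3, E2]
        rw [rowCoord_symm, rowCoord_single, Subsingleton.elim (e3 _) 0]
        simpa using hq _
    | i + 2 =>
      intro j t j' t'
      left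
      rfl
  · rw [← hI]
    ext x
    rw [LinearMap.mem_range, Ideal.mem_span_range_iff_exists_fun]
    constructor
    · rintro ⟨y, rfl⟩
      refine ⟨E1 y, ?_⟩
      rw [hε]
      exact Finset.sum_congr rfl fun j _ => mul_comm _ _
    · rintro ⟨c, rfl⟩
      refine ⟨E1.symm c, ?_⟩
      rw [hε, LinearEquiv.apply_symm_apply]
      exact Finset.sum_congr rfl fun j _ => mul_comm _ _
  · change LinearMap.ker ε = LinearMap.range f0
    ext x
    rw [LinearMap.mem_ker, LinearMap.mem_range, hε]
    constructor
    · intro h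
      obtain ⟨u, hu⟩ := hex2 _ h
      refine ⟨E2.symm u, ?_⟩
      rw [hf0, LinearEquiv.apply_symm_apply, hu, LinearEquiv.symm_apply_apply]
    · rintro ⟨y, rfl⟩
      rw [hf0, LinearEquiv.apply_symm_apply]
      exact hqM _
  · intro i
    match i with
    | 0 =>
      change LinearMap.ker f0 = LinearMap.range f1
      ext x
      rw [LinearMap.mem_ker, LinearMap.mem_range, hf0, LinearEquiv.map_eq_zero_iff]
      constructor
      · intro h
        obtain ⟨s, hs⟩ := hex1 _ h
        refine ⟨E3.symm (fun _ => s), ?_⟩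
        rw [hf1, LinearEquiv.apply_symm_apply]
        rw [LinearEquiv.symm_apply_eq, hs]
        rfl
      · rintro ⟨y, rfl⟩
        rw [hf1, LinearEquiv.apply_symm_apply, Matrix.mulVec_smul, hMq, smul_zero]
    | 1 =>
      change LinearMap.ker f1 = LinearMap.range (0 : FreeGr K r (b 4) →ₗ[PS K r] _)
      rw [LinearMap.range_zero, eq_bot_iff]
      intro x hx
      rw [LinearMap.mem_ker, hf1, LinearEquiv.map_eq_zero_iff] at hx
      have h5 : E3 x 0 = 0 := by
        have := congrFun hx 1
        simp only [Pi.smul_apply, smul_eq_mul, Pi.zero_apply, mul_eq_zero] at this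
        exact this.resolve_right hq1
      have h6 : E3 x = 0 := by
        funext i
        rw [Subsingleton.elim i 0]; exact h5
      rw [Submodule.mem_bot]
      exact (LinearEquiv.map_eq_zero_iff _).1 h6
    | i + 2 =>
      have : Subsingleton (FreeGr K r (b (i + 2 + 2))) := by
        have : IsEmpty ((j : ℕ) × Fin (b (i + 2 + 2) j)) := by
          constructor
          rintro ⟨j, t⟩
          have := t.2
          have h5 : b (i + 2 + 2) j = 0 := h4 i j
          omega
        infer_instance
      exact Subsingleton.elim _ _

theorem betti_final (I : Ideal (PS K r)) {n : Fin 10 → PS K r} (hI : I.IsPrime)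
    (hhom : IsHomIdeal K r I)
    (hnd : Nondeg K r I) (hn : ∀ i, (n i).IsHomogeneous 1)
    (hIn : I = Ideal.span (Set.range (subPfaffian (skn n)))) {d : ℕ} (hcodim : d + 3 = r)
    (hH : hilbSeries K r I * (1 - PowerSeries.X) ^ (d + 1) =
      1 + 3 * PowerSeries.X + PowerSeries.X ^ 2)
    (b : ℕ → ℕ → ℕ) (h11 : b 1 1 = 5) (h1 : ∀ j, j ≠ 1 → b 1 j = 0)
    (h21 : b 2 1 = 5) (h2 : ∀ j, j ≠ 1 → b 2 j = 0)
    (h32 : b 3 2 = 1) (h3 : ∀ j, j ≠ 2 → b 3 j = 0)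
    (h4 : ∀ i j, b (i + 4) j = 0) : HasBettiDiagram K r I b := by
  obtain ⟨hex, h10⟩ := exact_left hI hhom hnd hn hIn hcodim hH
  exact betti I (skn n) (spf n) (skn_hom hn) (spf_hom hn) ((spf_span n).trans hIn.symm)
    (skn_mul_spf n) (spf_mul_skn n) h10 hex (exact_right hI hhom hnd hn hIn hcodim hH)
    b h11 h1 h21 h2 h32 h3 h4

end AMD

namespace AMD
variable {K : Type} [Field K] {r : ℕ}

theorem lin_rep (f : PS K r) (hf : f.IsHomogeneous 1) :
    ∃ a : Fin (r + 1) → K, f = ∑ i, C (a i) * X i := by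
  have h : f ∈ homogeneousSubmodule (Fin (r + 1)) K 1 := hf
  rw [homogeneousSubmodule_one_eq_span_X, Submodule.mem_span_range_iff_exists_fun] at h
  obtain ⟨c, hc⟩ := h
  refine ⟨c, ?_⟩
  rw [← hc]
  exact Finset.sum_congr rfl fun i _ => smul_eq_C_mul _ _

theorem exists_equiv_last (v : Fin (r + 1) → K) (hv : v ≠ 0) :
    ∃ L : (Fin (r + 1) → K) ≃ₗ[K] (Fin (r + 1) → K), L (Pi.single (Fin.last r) 1) = v := by
  obtain ⟨p, hp⟩ := Function.ne_iff.1 hv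
  let σ := Equiv.swap p (Fin.last r)
  let L : (Fin (r + 1) → K) →ₗ[K] (Fin (r + 1) → K) :=
    LinearMap.funLeft K K σ + (LinearMap.proj (Fin.last r)).smulRight (v - Pi.single p 1)
  have hL : ∀ x i, L x i = x (σ i) + x (Fin.last r) * (v i - (Pi.single p 1 : Fin (r+1) → K) i) := by
    intro x i
    simp [L, LinearMap.funLeft_apply]
  have hinj : Function.Injective L := by
    rw [← LinearMap.ker_eq_bot, eq_bot_iff]
    intro x hx
    have hx : L x = 0 := hx
    have h1 := congrFun hx p
    rw [hL] at h1
    simp only [σ, Equiv.swap_apply_left, Pi.single_eq_same, Pi.zero_apply] at h1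
    have h2 : x (Fin.last r) * v p = 0 := by linear_combination h1
    have h3 : x (Fin.last r) = 0 := by
      rcases mul_eq_zero.1 h2 with h | h
      · exact h
      · exact absurd h hp
    rw [Submodule.mem_bot]
    funext i
    have h4 := congrFun hx (σ i)
    rw [hL, h3] at h4
    simpa [σ] using h4
  refine ⟨LinearEquiv.ofInjectiveEndo L hinj, ?_⟩
  rw [LinearEquiv.coe_ofInjectiveEndo]
  funext i
  rw [hL]
  by_cases hi : i = p
  · subst hi; simp [σ]
  · have : σ i ≠ Fin.last r := by
      intro h
      have h2 := congrArg σ h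
      simp only [σ, Equiv.swap_apply_right, Equiv.swap_apply_self] at h2
      exact hi h2
    simp [this, hi]

/-- linear substitution -/
def subst (L : (Fin (r + 1) → K) →ₗ[K] (Fin (r + 1) → K)) : PS K r →ₐ[K] PS K r :=
  aeval fun i => ∑ j, C (L (Pi.single j 1) i) * X j

theorem subst_X (L : (Fin (r + 1) → K) →ₗ[K] (Fin (r + 1) → K)) (i) :
    subst L (X i) = ∑ j, C (L (Pi.single j 1) i) * X j := by
  simp [subst]

theorem lin_apply (L : (Fin (r + 1) → K) →ₗ[K] (Fin (r + 1) → K)) (x : Fin (r + 1) → K) (i) :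
    L x i = ∑ j, x j * L (Pi.single j 1) i := by
  conv_lhs => rw [pi_eq_sum_univ' x]
  rw [map_sum, Finset.sum_apply]
  refine Finset.sum_congr rfl fun j _ => ?_
  rw [map_smul]
  rfl

theorem subst_comp (L L' : (Fin (r + 1) → K) →ₗ[K] (Fin (r + 1) → K)) (h : L' ∘ₗ L = LinearMap.id) :
    (subst L).comp (subst L') = AlgHom.id K _ := by
  apply algHom_ext
  intro i
  rw [AlgHom.comp_apply, subst_X, map_sum]
  simp only [map_mul, subst_X, algHom_C, algebraMap_eq, Finset.mul_sum]
  rw [Finset.sum_comm]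
  have : ∀ k : Fin (r + 1), ∑ x, C (L' (Pi.single x 1) i) * (C (L (Pi.single k 1) x) * X k) =
      C ((Pi.single k 1 : Fin (r + 1) → K) i) * (X k : PS K r) := by
    intro k
    have h2 : L' (L (Pi.single k 1)) i = (Pi.single k 1 : Fin (r + 1) → K) i := by
      rw [← LinearMap.comp_apply, h]; rfl
    rw [← h2, lin_apply L', map_sum, Finset.sum_mul]
    refine Finset.sum_congr rfl fun x _ => ?_
    rw [map_mul]; ring
  rw [Finset.sum_congr rfl fun k _ => this k]
  simp [Pi.single_apply]

theorem map_sk {R R' : Type} [CommRing R] [CommRing R'] (f : R →+* R')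
    (n01 n02 n03 n04 n12 n13 n14 n23 n24 n34 : R) (j : Fin 5) :
    f (subPfaffian (sk n01 n02 n03 n04 n12 n13 n14 n23 n24 n34) j) =
      subPfaffian (sk (f n01) (f n02) (f n03) (f n04) (f n12) (f n13) (f n14) (f n23) (f n24)
        (f n34)) j := by
  rw [sk_pf, sk_pf]
  fin_cases j <;> simp

theorem map_span_sk {R R' : Type} [CommRing R] [CommRing R'] (f : R →+* R')
    (n01 n02 n03 n04 n12 n13 n14 n23 n24 n34 : R) :
    (Ideal.span (Set.range (subPfaffian (sk n01 n02 n03 n04 n12 n13 n14 n23 n24 n34)))).map f =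
      Ideal.span (Set.range (subPfaffian (sk (f n01) (f n02) (f n03) (f n04) (f n12) (f n13) (f n14)
        (f n23) (f n24) (f n34)))) := by
  rw [Ideal.map_span, ← Set.range_comp]
  congr 2
  funext j
  exact map_sk f _ _ _ _ _ _ _ _ _ _ j

theorem cone_of_large {I : Ideal (PS K r)} {n : Fin 10 → PS K r} (hn : ∀ i, (n i).IsHomogeneous 1)
    (hIn : I = Ideal.span (Set.range (subPfaffian (skn n)))) (hr : 10 < r + 1) :
    IsConeIdeal K r I := by
  choose a ha using fun i => lin_rep (n i) (hn i)
  obtain ⟨v, hv, hv0⟩ : ∃ v : Fin (r + 1) → K, (∀ k, ∑ i, a k i * v i = 0) ∧ v ≠ 0 := by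
    have hlt : Module.finrank K (Fin 10 → K) < Module.finrank K (Fin (r + 1) → K) := by simpa using hr
    have h1 := LinearMap.ker_ne_bot_of_finrank_lt (f := (Matrix.of a).mulVecLin) hlt
    obtain ⟨v, hv, hv0⟩ := (Submodule.ne_bot_iff _).1 h1
    exact ⟨v, fun k => congrFun hv k, hv0⟩
  obtain ⟨L, hL⟩ := exists_equiv_last v hv0
  let φ : PS K r ≃ₐ[K] PS K r := AlgEquiv.ofAlgHom (subst L.toLinearMap) (subst L.symm.toLinearMap)
    (subst_comp _ _ (by ext; simp)) (subst_comp _ _ (by ext; simp))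
  have hφ : ∀ f, φ f = subst L.toLinearMap f := fun f => rfl
  let m : Fin 10 → MvPolynomial (Fin r) K := fun k =>
    ∑ j : Fin r, C (∑ i, a k i * L (Pi.single j.castSucc 1) i) * X j
  have hm : ∀ k, φ (n k) = rename (Fin.castSucc : Fin r → Fin (r + 1)) (m k) := by
    intro k
    have h1 : φ (n k) = ∑ j : Fin (r + 1), C (∑ i, a k i * L (Pi.single j 1) i) * X j := by
      rw [hφ, ha k, map_sum]
      simp only [map_mul, subst_X, algHom_C, algebraMap_eq, Finset.mul_sum]
      rw [Finset.sum_comm]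
      refine Finset.sum_congr rfl fun j _ => ?_
      rw [map_sum, Finset.sum_mul]
      refine Finset.sum_congr rfl fun i _ => ?_
      rw [map_mul, mul_assoc]; rfl
    rw [h1, Fin.sum_univ_castSucc, hL, hv k]
    simp only [m, map_sum, map_mul, rename_C, rename_X, map_zero, zero_mul, add_zero]
  refine ⟨φ, ?_, Ideal.span (Set.range (subPfaffian (sk (m 0) (m 1) (m 2) (m 3) (m 4) (m 5) (m 6)
    (m 7) (m 8) (m 9)))), ?_⟩
  · intro i
    rw [hφ, subst_X]
    exact Submodule.sum_mem (gr K r 1) fun j _ => hom_C_mul (isHomogeneous_X _ _) _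
  · rw [hIn, skn]
    have e1 := map_span_sk (φ : PS K r →+* PS K r) (n 0) (n 1) (n 2) (n 3) (n 4) (n 5) (n 6) (n 7) (n 8) (n 9)
    have e2 := map_span_sk ((rename (Fin.castSucc : Fin r → Fin (r + 1)) :
      MvPolynomial (Fin r) K →ₐ[K] PS K r) : MvPolynomial (Fin r) K →+* PS K r)
      (m 0) (m 1) (m 2) (m 3) (m 4) (m 5) (m 6) (m 7) (m 8) (m 9)
    refine e1.trans (Eq.trans ?_ e2.symm)
    simp only [RingHom.coe_coe]
    simp only [hm]

end AMD

namespace AMD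
variable {K : Type} [Field K] {r : ℕ}

theorem lin_mem_irr (f : PS K r) (hf : f.IsHomogeneous 1) : f ∈ irr K r := by
  obtain ⟨a, rfl⟩ := lin_rep f hf
  exact Ideal.sum_mem _ fun i _ => Ideal.mul_mem_left _ _ (Ideal.subset_span ⟨i, rfl⟩)

theorem socle_elem {N : Ideal (PS K r)} (hN : IsHomIdeal K r N)
    (htop : ∀ n, 3 ≤ n → ∀ f : PS K r, f.IsHomogeneous n → f ∈ N)
    {e0 : PS K r} (he0 : e0.IsHomogeneous 1) (he0N : e0 ∉ N)
    (hnon : ∀ y : PS K r, y.IsHomogeneous 1 →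
      (∀ z : PS K r, z.IsHomogeneous 1 → y * z ∈ N) → y ∈ N)
    {w : PS K r} (hw : ∀ f : PS K r, f.IsHomogeneous 2 → ∃ c : K, f - C c * w ∈ N)
    (f : PS K r) (hf : ∀ g : PS K r, g.IsHomogeneous 1 → f * g ∈ N) :
    ∃ c : K, f - C c * w ∈ N := by
  have hk : ∀ k, ∀ g : PS K r, g.IsHomogeneous 1 → homogeneousComponent k f * g ∈ N := by
    intro k g hg
    rw [← comp_mul hg]
    exact hN _ (hf g hg) _
  obtain ⟨c, hc⟩ := hw _ (homogeneousComponent_isHomogeneous 2 f)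
  refine ⟨c, ?_⟩
  have h0 : homogeneousComponent 0 f ∈ N := by
    have h1 := hk 0 e0 he0
    rw [homogeneousComponent_zero] at h1 ⊢
    by_cases hz : coeff 0 f = 0
    · rw [hz]; simp
    · exfalso
      apply he0N
      have h2 := N.mul_mem_left (C (coeff 0 f)⁻¹) h1
      rwa [← mul_assoc, ← map_mul, inv_mul_cancel₀ hz, map_one, one_mul] at h2
  have h1 : homogeneousComponent 1 f ∈ N :=
    hnon _ (homogeneousComponent_isHomogeneous 1 f) (hk 1)
  have h2 : f - homogeneousComponent 2 f ∈ N := by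
    have : f - homogeneousComponent 2 f =
        ∑ i ∈ Finset.range (f.totalDegree + 3), if i = 2 then 0 else homogeneousComponent i f := by
      have e1 : f = ∑ i ∈ Finset.range (f.totalDegree + 3), homogeneousComponent i f := by
        conv_lhs => rw [← sum_homogeneousComponent f]
        refine Finset.sum_subset (fun x hx => ?_) (fun x _ hx => ?_)
        · rw [Finset.mem_range] at hx ⊢; omega
        · rw [Finset.mem_range] at hx
          exact homogeneousComponent_eq_zero _ _ (by omega)
      have e2 : homogeneousComponent 2 f = ∑ i ∈ Finset.range (f.totalDegree + 3),
          if i = 2 then homogeneousComponent i f else 0 := by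
        rw [Finset.sum_ite_eq']; simp
      nth_rewrite 1 [e1]
      rw [e2, ← Finset.sum_sub_distrib]
      refine Finset.sum_congr rfl fun i _ => ?_
      split_ifs <;> simp
    rw [this]
    refine Ideal.sum_mem _ fun i _ => ?_
    split_ifs with hi
    · exact zero_mem _
    · rcases Nat.lt_or_ge i 3 with h | h
      · have : i = 0 ∨ i = 1 := by omega
        rcases this with rfl | rfl
        · exact h0
        · exact h1
      · exact htop i h _ (homogeneousComponent_isHomogeneous _ _)
  have := add_mem h2 hc
  simpa using this

theorem gorenstein {I : Ideal (PS K r)} {ls : List (PS K r)} {d : ℕ} (hdim : DimEq K r I d)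
    (hlen : ls.length = d + 1) (hlin : ∀ l ∈ ls, l.IsHomogeneous 1) (hreg : RegOn I ls)
    (hN : IsHomIdeal K r (NN I ls))
    (htop : ∀ n, 3 ≤ n → ∀ f : PS K r, f.IsHomogeneous n → f ∈ NN I ls)
    {e0 : PS K r} (he0 : e0.IsHomogeneous 1) (he0N : e0 ∉ NN I ls)
    (hnon : ∀ y : PS K r, y.IsHomogeneous 1 →
      (∀ z : PS K r, z.IsHomogeneous 1 → y * z ∈ NN I ls) → y ∈ NN I ls)
    {w : PS K r} (hw2 : w.IsHomogeneous 2) (hwN : w ∉ NN I ls)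
    (hw : ∀ f : PS K r, f.IsHomogeneous 2 → ∃ c : K, f - C c * w ∈ NN I ls) :
    IsArithGorenstein K r I := by
  refine ⟨d + 1, ls.map (Ideal.Quotient.mk I), ?_, by simp [hlen], ?_,
    (isRegSeq_iff I ls).2 hreg, ?_⟩
  · exact hdim.trans (by push_cast; rfl)
  · intro x hx
    obtain ⟨l, hl, rfl⟩ := List.mem_map.1 hx
    exact Ideal.mem_map_of_mem _ (lin_mem_irr l (hlin l hl))
  · set Q := Ideal.span {x | x ∈ ls.map (Ideal.Quotient.mk I)} with hQ
    let π : PS K r →+* (PS K r ⧸ I) ⧸ Q := (Ideal.Quotient.mk Q).comp (Ideal.Quotient.mk I)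
    have hπ : ∀ f, π f = 0 ↔ f ∈ NN I ls := by
      intro f
      change Ideal.Quotient.mk Q (Ideal.Quotient.mk I f) = 0 ↔ _
      rw [Ideal.Quotient.eq_zero_iff_mem, hQ, mk_mem_span_list]
    have hsurj : Function.Surjective π :=
      Ideal.Quotient.mk_surjective.comp Ideal.Quotient.mk_surjective
    have hmap : Ideal.map (Ideal.Quotient.mk Q) (maxIdl K r I) = Ideal.map π (irr K r) := by
      rw [maxIdl, Ideal.map_map]; rfl
    have hCs : ∀ (c : K) (f : PS K r), c • π f = π (C c * f) := by
      intro c f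
      rw [← smul_eq_C_mul]; rfl
    rw [hmap]
    have hws : π w ∈ socle K ((PS K r ⧸ I) ⧸ Q) (Ideal.map π (irr K r)) := by
      intro z hz
      obtain ⟨g, hg, rfl⟩ := (Ideal.mem_map_iff_of_surjective π hsurj).1 hz
      rw [← map_mul, hπ]
      refine Submodule.span_induction (p := fun g _ => g * w ∈ NN I ls) ?_ ?_ ?_ ?_ hg
      · rintro _ ⟨i, rfl⟩
        exact htop 3 le_rfl _ ((isHomogeneous_X K i).mul hw2)
      · rw [zero_mul]; exact zero_mem _
      · intro a b _ _ ha hb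
        rw [add_mul]; exact add_mem ha hb
      · intro a b _ hb
        rw [smul_eq_mul, mul_assoc]; exact Ideal.mul_mem_left _ _ hb
    refine finrank_eq_one (⟨π w, hws⟩ : socle K ((PS K r ⧸ I) ⧸ Q) (Ideal.map π (irr K r))) ?_ ?_
    · intro h
      exact hwN ((hπ w).1 (congrArg Subtype.val h))
    · rintro ⟨x, hx⟩
      obtain ⟨f, rfl⟩ := hsurj x
      have hf : ∀ g : PS K r, g.IsHomogeneous 1 → f * g ∈ NN I ls := by
        intro g hg
        rw [← hπ, mul_comm, map_mul]
        exact hx _ (Ideal.mem_map_of_mem _ (lin_mem_irr g hg))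
      obtain ⟨c, hc⟩ := socle_elem hN htop he0 he0N hnon hw f hf
      refine ⟨c, Subtype.ext ?_⟩
      change c • π w = π f
      rw [hCs]
      rw [← hπ, map_sub, sub_eq_zero] at hc
      exact hc.symm

theorem main_aux (K : Type) [Field K] [IsAlgClosed K] (r : ℕ)
    (I : Ideal (PS K r)) (hprime : I.IsPrime)
    (hhom : AMD.IsHomIdeal K r I) (hnd : AMD.Nondeg K r I)
    (d : ℕ) (hdim : AMD.DimEq K r I d) (hcodim : d + 3 = r)
    (hdeg : AMD.DegreeEq K r I d 5)
    (hcone : ¬ AMD.IsConeIdeal K r I)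
    (hACM : AMD.IsACM K r I)
    (b : ℕ → ℕ → ℕ) (h11 : b 1 1 = 5) (h1 : ∀ j, j ≠ 1 → b 1 j = 0)
    (h21 : b 2 1 = 5) (h2 : ∀ j, j ≠ 1 → b 2 j = 0)
    (h32 : b 3 2 = 1) (h3 : ∀ j, j ≠ 2 → b 3 j = 0)
    (h4 : ∀ i j, b (i + 4) j = 0) :
    d ≤ 6 ∧ IsArithGorenstein K r I ∧ IsPfaffianVariety K r I ∧ HasBettiDiagram K r I b := by
  obtain ⟨ls, hlen, hlin, hreg, hN, f0, f1, f2, f3, hH⟩ :=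
    setup I hprime hhom hnd d hdim hcodim hdeg hACM
  obtain ⟨T, i1, i2, i3, ι, hex, hfree⟩ := exists_coeff_ring (K := K) ls I hreg
  have htop : ∀ n, 3 ≤ n → ∀ f : PS K r, f.IsHomogeneous n → f ∈ NN I ls :=
    fun n hn => (quot_zero_iff _ n).1 (f3 n hn)
  have hne : NN I ls ≠ ⊤ := by
    intro h
    have h5 : Module.finrank K (quotComponent K r (NN I ls) 0) = 0 :=
      (quot_zero_iff _ 0).2 fun f _ => by rw [h]; trivial
    rw [f0] at h5
    exact one_ne_zero h5
  have D : Dat I ls ι := ⟨hprime, hhom, hnd, hlin, hN, hne, hex, htop, hfree⟩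
  obtain ⟨e, he, hsp, hind⟩ := exists_e f1
  obtain ⟨lam, hlam, w, hw2, hw1⟩ := exists_lam f2
  have hwN : w ∉ NN I ls := by
    intro h
    rw [(hlam w hw2).2 h] at hw1
    exact zero_ne_one hw1
  have hw : ∀ f : PS K r, f.IsHomogeneous 2 → ∃ c : K, f - C c * w ∈ NN I ls := by
    intro f hf
    refine ⟨lam f, ?_⟩
    rw [← hlam _ (hf.sub (hom_C_mul hw2 _)), map_sub, ← smul_eq_C_mul, map_smul, hw1]
    simp
  have hnon := nondeg D he hsp hind hw2 hwN hw
  have he0N : e 0 ∉ NN I ls := by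
    intro h
    have := congrFun (hind (Pi.single 0 1) (by simpa [Fin.sum_univ_three] using h)) 0
    simp at this
  obtain ⟨y, c, hy, hyind, h00, h01, h12, h11', h22, hl⟩ := normal_form f1 he hind lam hlam hnon
  have hyw : y 0 * y 2 ∉ NN I ls := by
    intro h
    rw [(hlam _ ((hy 0).mul (hy 2))).2 h] at hl
    exact zero_ne_one hl
  obtain ⟨n, hn, hIn⟩ := pf_structure D (indep_span f1 hy hyind) hyind hy c h00 h01 h12 h11' h22 hyw
  have hIn' : I = Ideal.span (Set.range (subPfaffian (skn n))) := hIn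
  refine ⟨?_, ?_, ?_, ?_⟩
  · by_contra hd
    exact hcone (cone_of_large hn hIn' (by omega))
  · exact gorenstein hdim hlen hlin hreg hN htop (he 0) he0N hnon hw2 hwN hw
  · exact ⟨skn n, sk_transpose _ _ _ _ _ _ _ _ _ _, skn_hom hn, hIn'⟩
  · exact betti_final I hprime hhom hnd hn hIn' hcodim hH b h11 h1 h21 h2 h32 h3 h4

end AMD

/-- **Theorem 2.2 (a).**  A non-degenerate arithmetically Cohen-Macaulay variety
`X ⊆ ℙ^r_K` of degree `5` and codimension `3` which is not a cone satisfies
`dim X ≤ 6`, is arithmetically Gorenstein, and is the Pfaffian variety defined by the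
five `4 × 4` Pfaffians of a skew-symmetric `5 × 5` matrix of linear forms; its minimal
free resolution is the Buchsbaum-Eisenbud complex `0 → S(-5) → S⁵(-3) → S⁵(-2) → I_X → 0`. -/
theorem degree_five_codim_three_ACM
    (K : Type) [Field K] [IsAlgClosed K] (r : ℕ)
    (I : Ideal (PS K r)) (hprime : I.IsPrime)
    (hhom : AMD.IsHomIdeal K r I) (hnd : AMD.Nondeg K r I)
    (d : ℕ) (hdim : AMD.DimEq K r I d) (hcodim : d + 3 = r)
    (hdeg : AMD.DegreeEq K r I d 5)
    (hcone : ¬ AMD.IsConeIdeal K r I)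
    (hACM : AMD.IsACM K r I) :
    d ≤ 6 ∧ AMD.IsArithGorenstein K r I ∧ AMD.IsPfaffianVariety K r I ∧
    AMD.HasBettiDiagram K r I (fun i j => match i, j with
      | 1, 1 => 5 | 2, 1 => 5 | 3, 2 => 1 | _, _ => 0) := by
  refine AMD.main_aux K r I hprime hhom hnd d hdim hcodim hdeg hcone hACM _ rfl ?_ rfl ?_ rfl ?_ ?_
  · intro j hj
    match j, hj with
    | 0, _ => rfl
    | 1, h => exact absurd rfl h
    | _ + 2, _ => rfl
  · intro j hj
    match j, hj with
    | 0, _ => rfl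
    | 1, h => exact absurd rfl h
    | _ + 2, _ => rfl
  · intro j hj
    match j, hj with
    | 0, _ => rfl
    | 1, _ => rfl
    | 2, h => exact absurd rfl h
    | _ + 3, _ => rfl
  · intro i j
    rfl
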